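/- arXiv:1911.04777 — 2 statements merged into one kernel-verified Lean document; each statement's English description precedes it below -/
import Mathlib

section
/- Let p ≡ −1 (mod 16) be a prime, K' = ℚ(√(2√p)) ⊂ ℝ, k = ℚ(√p) its quadratic subfield, and σ the nontrivial automorphism of K' fixing k. Then there exists a totally positive unit ξ of the ring of integers of K' such that the unit group of the ring of integers of K' is generated by −1, ξ, and σ(ξ), and such that the relative norm ξ·σ(ξ) is the fundamental unit of k. -/
open NumberField IntermediateField

namespace TPU

theorem no_neg_sq {p : ℕ} (hp : p.Prime) (h4 : p % 4 = 3) {x y n : ℤ}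
    (h : x ^ 2 - p * y ^ 2 = - n ^ 2) : n = 0 := by
  have h1 : x.natAbs ^ 2 + n.natAbs ^ 2 = p * y.natAbs ^ 2 := by
    zify; simp only [sq_abs]; linarith
  have h2 := Nat.eq_sq_add_sq_iff.mp ⟨_, _, h1.symm⟩
  by_contra hn
  have hy : y.natAbs ≠ 0 := by
    intro hy
    rw [hy] at h1
    have : n.natAbs ^ 2 = 0 := by simp at h1; simp [h1.2]
    exact hn (by simpa using this)
  have hm : p ∈ (p * y.natAbs ^ 2).primeFactors := by
    simp [Nat.mem_primeFactors, hp, hp.ne_zero]; simpa using hy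
  have h3 := h2 p hm h4
  have := Fact.mk hp
  rw [padicValNat.mul hp.ne_zero (pow_ne_zero _ hy), padicValNat.pow, padicValNat.self hp.one_lt] at h3
  rw [Nat.even_iff] at h3
  omega

theorem norm_ne_zero {p : ℕ} (hp : p.Prime) {z : ℤ√(p:ℤ)} (hz : z ≠ 0) : z.norm ≠ 0 := by
  intro h
  apply hz
  refine (Zsqrtd.norm_eq_zero ?_ z).mp h
  intro n hn
  exact (Nat.prime_iff_prime_int.mp hp).not_isSquare ⟨n, hn⟩

theorem isUnit_norm {p : ℕ} (hp : p.Prime) (h4 : p % 4 = 3) {z : ℤ√(p:ℤ)} (hz : IsUnit z) :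
    z.norm = 1 := by
  rcases Int.isUnit_iff.mp ((Zsqrtd.isUnit_iff_norm_isUnit z).mp hz) with h | h
  · exact h
  · exfalso
    rw [Zsqrtd.norm_def] at h
    have := no_neg_sq hp h4 (x := z.re) (y := z.im) (n := 1) (by linarith)
    omega

/-- The fundamental solution. -/
theorem exists_fund {p : ℕ} (hp : p.Prime) (hmod : p % 16 = 15) :
    ∃ e : Pell.Solution₁ (p : ℤ), Pell.IsFundamental e ∧
      ∃ a b : ℤ, a ^ 2 - p * b ^ 2 = 2 ∧ e.x = a ^ 2 - 1 ∧ e.y = a * b := by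
  have hpos : (0:ℤ) < p := by exact_mod_cast hp.pos
  have hpp : Prime (p:ℤ) := Nat.prime_iff_prime_int.mp hp
  obtain ⟨e, he⟩ := Pell.IsFundamental.exists_of_not_isSquare hpos hpp.not_isSquare
  refine ⟨e, he, ?_⟩
  have h1 := e.prop
  have hx := he.1
  have hy := he.2.1
  set X := e.x with hX
  set Y := e.y with hY
  -- coprime factor lemma
  have key : ∀ u v w : ℤ, 0 < u → 0 < v → IsCoprime u v → u * v = p * w ^ 2 →
      ∃ a b : ℤ, 0 ≤ a ∧ 0 ≤ b ∧ (a * b = w ∨ a * b = - w) ∧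
        ((u = a ^ 2 ∧ v = p * b ^ 2) ∨ (v = a ^ 2 ∧ u = p * b ^ 2)) := by
    have aux : ∀ u v w : ℤ, 0 < u → 0 < v → IsCoprime u (p * v) → u * v = w ^ 2 →
      ∃ a b : ℤ, 0 ≤ a ∧ 0 ≤ b ∧ (a * b = w ∨ a * b = - w) ∧ u = a ^ 2 ∧ v = b ^ 2 := by
      intro u v w hu hv hc h
      have hc' : IsCoprime u v := hc.of_mul_right_right
      obtain ⟨a, ha⟩ := Int.sq_of_isCoprime hc' h
      obtain ⟨b, hb⟩ := Int.sq_of_isCoprime hc'.symm (by rw [mul_comm]; exact h)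
      have ha : u = a ^ 2 := by rcases ha with h | h <;> nlinarith [sq_nonneg a]
      have hb : v = b ^ 2 := by rcases hb with h | h <;> nlinarith [sq_nonneg b]
      refine ⟨|a|, |b|, abs_nonneg _, abs_nonneg _, ?_, by simp [ha], by simp [hb]⟩
      rw [← abs_mul]
      apply sq_eq_sq_iff_eq_or_eq_neg.mp
      rw [sq_abs, ← h, ha, hb]; ring
    intro u v w hu hv hc h
    have hd : (p:ℤ) ∣ u * v := ⟨_, h⟩
    rcases hpp.dvd_or_dvd hd with ⟨u', rfl⟩ | ⟨v', rfl⟩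
    · have hu' : 0 < u' := by nlinarith
      obtain ⟨a, b, ha, hb, hab, h1, h2⟩ := aux v u' w hv hu' hc.symm
        (mul_left_cancel₀ hpos.ne' (by linarith))
      exact ⟨a, b, ha, hb, hab, Or.inr ⟨h1, by rw [h2]⟩⟩
    · have hv' : 0 < v' := by nlinarith
      obtain ⟨a, b, ha, hb, hab, h1, h2⟩ := aux u v' w hu hv' hc
        (mul_left_cancel₀ hpos.ne' (by linarith))
      exact ⟨a, b, ha, hb, hab, Or.inl ⟨h1, by rw [h2]⟩⟩
  rcases Int.even_or_odd' X with ⟨m, hm | hm⟩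
  · skip
    obtain ⟨a, b, ha, hb, hab, h⟩ := key (X + 1) (X - 1) Y (by omega) (by omega)
      ⟨1 - m, m, by rw [hm]; ring⟩ (by linarith)
    have hab : a * b = Y := by
      rcases hab with h | h
      · exact h
      · nlinarith [mul_nonneg ha hb]
    rcases h with ⟨h2, h3⟩ | ⟨h2, h3⟩
    · exact ⟨a, b, by linarith, by linarith, hab.symm⟩
    · exfalso
      have h5 : (p:ℤ) * b ^ 2 - a ^ 2 = 2 := by linarith
      have h6 : (p:ℤ) % 8 = 7 := by omega
      have h7 : ((p:ℤ) * b ^ 2 - a ^ 2) % 8 = 2 := by rw [h5]; rfl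
      have ha8 : a % 8 = 0 ∨ a % 8 = 1 ∨ a % 8 = 2 ∨ a % 8 = 3 ∨ a % 8 = 4 ∨ a % 8 = 5 ∨ a % 8 = 6 ∨ a % 8 = 7 := by omega
      have hb8 : b % 8 = 0 ∨ b % 8 = 1 ∨ b % 8 = 2 ∨ b % 8 = 3 ∨ b % 8 = 4 ∨ b % 8 = 5 ∨ b % 8 = 6 ∨ b % 8 = 7 := by omega
      have hodd : a % 2 = 1 := by
        have : (a ^ 2) % 2 = 1 := by omega
        rcases Int.emod_two_eq_zero_or_one a with h | h
        · simp [pow_two, Int.mul_emod, h] at this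
        · exact h
      have : a ^ 2 % 8 = 1 := by
        rcases ha8 with h | h | h | h | h | h | h | h <;> first | omega | simp [pow_two, Int.mul_emod, h]
      have hb2 : b ^ 2 % 8 = 0 ∨ b ^ 2 % 8 = 1 ∨ b ^ 2 % 8 = 4 := by
        rcases hb8 with h | h | h | h | h | h | h | h <;> simp [pow_two, Int.mul_emod, h]
      have h9 : (p:ℤ) * b ^ 2 % 8 = 3 := by omega
      rw [Int.mul_emod, h6] at h9
      rcases hb2 with h | h | h <;> rw [h] at h9 <;> omega
  · exfalso
    have hYe : ∃ w, Y = 2 * w := by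
      have : (2:ℤ) ∣ p * Y ^ 2 := ⟨2 * m * (m + 1), by linear_combination -h1 + (X + 2 * m + 1) * hm⟩
      rcases Int.prime_two.dvd_or_dvd this with h | h
      · omega
      · exact Int.prime_two.dvd_of_dvd_pow h
    obtain ⟨w, hw⟩ := hYe
    obtain ⟨a, b, ha, hb, hab, h⟩ := key (m + 1) m w (by omega) (by omega)
      ⟨1, -1, by ring⟩ (by rw [hm, hw] at h1; linarith)
    rcases h with ⟨h2, h3⟩ | ⟨h2, h3⟩
    · have hlt : 1 < a := by nlinarith
      have := he.x_le_x (a := Pell.Solution₁.mk a b (by linarith)) (by simpa using hlt)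
      simp only [Pell.Solution₁.x_mk] at this
      nlinarith
    · have := no_neg_sq hp (by omega) (x := a) (y := b) (n := 1) (by linarith)
      omega


noncomputable def zBasis (d : ℤ) : Module.Basis (Fin 2) ℤ (ℤ√d) :=
  Module.Basis.ofEquivFun
    { toFun := fun z => ![z.re, z.im]
      invFun := fun f => ⟨f 0, f 1⟩
      left_inv := fun z => by simp
      right_inv := fun f => by ext i; fin_cases i <;> simp
      map_add' := fun x y => by simp
      map_smul' := fun n x => by simp [zsmul_eq_mul] }

instance (d : ℤ) : Module.Free ℤ (ℤ√d) := Module.Free.of_basis (zBasis d)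
instance (d : ℤ) : Module.Finite ℤ (ℤ√d) := Module.Finite.of_basis (zBasis d)

theorem algNorm (d : ℤ) (z : ℤ√d) : Algebra.norm ℤ z = z.norm := by
  rw [Algebra.norm_eq_matrix_det (zBasis d), Matrix.det_fin_two]
  simp [Algebra.leftMulMatrix_eq_repr_mul, zBasis, Zsqrtd.norm_def]

theorem sq_ideal {R : Type*} [CommRing R] {C C' w β : R} (hw : IsUnit w) (hc : IsCoprime C C')
    (h : C * C' = w * β ^ 2) : (Ideal.span {C, β}) ^ 2 = Ideal.span {C} := by
  obtain ⟨u, v, huv⟩ := hc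
  obtain ⟨w, rfl⟩ := hw
  rw [pow_two, Ideal.span_pair_mul_span_pair]
  apply le_antisymm
  · rw [Ideal.span_le]
    intro x hx
    simp only [Set.mem_insert_iff, Set.mem_singleton_iff] at hx
    rw [SetLike.mem_coe, Ideal.mem_span_singleton]
    rcases hx with rfl | rfl | rfl | rfl
    · exact ⟨C, rfl⟩
    · exact ⟨β, rfl⟩
    · exact ⟨β, mul_comm _ _⟩
    · refine ⟨(↑w⁻¹ : R) * C', ?_⟩
      rw [mul_left_comm, h, ← mul_assoc]; simp [pow_two]
  · rw [Ideal.span_singleton_le_iff_mem]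
    have : C = u * (C * C) + (v * w) * (β * β) := by
      linear_combination (-C) * huv + v * h
    have h2 : u * (C * C) + (v * w) * (β * β) ∈ Ideal.span {C * C, C * β, β * C, β * β} := by
      apply Ideal.add_mem <;> apply Ideal.mul_mem_left <;> apply Ideal.subset_span <;> simp
    rwa [← this] at h2

/-- integer that is a square of an ideal -/
theorem int_sq_ideal {p : ℕ} (hp : p.Prime) {m : ℤ} (hm : Squarefree m) {b : Ideal (ℤ√(p:ℤ))}
    (h : b ^ 2 = Ideal.span {(m : ℤ√(p:ℤ))}) : m ∣ 2 * p := by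
  have hm' : Squarefree m.natAbs := Int.squarefree_natAbs.mpr hm
  have key : ∀ l : ℕ, l.Prime → l ∣ m.natAbs → l ∣ 2 * p := by
    intro l hl hlm
    by_contra hl2
    have hl' : Prime (l:ℤ) := Nat.prime_iff_prime_int.mp hl
    have hlm' : (l:ℤ) ∣ m := Int.natCast_dvd.mpr hlm
    have hl2' : ¬ (l:ℤ) ∣ 2 * p := by
      intro hh; exact hl2 (by exact_mod_cast hh)
    have hbl : b ≤ Ideal.span {((l:ℤ) : ℤ√(p:ℤ))} := by
      intro x hx
      have hx2 : x ^ 2 ∈ b ^ 2 := Ideal.pow_mem_pow hx 2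
      rw [h, Ideal.mem_span_singleton] at hx2
      have hx3 : ((l:ℤ) : ℤ√(p:ℤ)) ∣ x ^ 2 :=
        dvd_trans ((Zsqrtd.intCast_dvd_intCast _ _).mpr hlm') hx2
      rw [Zsqrtd.intCast_dvd] at hx3
      obtain ⟨h1, h2⟩ := hx3
      simp only [pow_two, Zsqrtd.re_mul, Zsqrtd.im_mul] at h1 h2
      rw [Ideal.mem_span_singleton, Zsqrtd.intCast_dvd]
      have h3 : (l:ℤ) ∣ 2 * (x.re * x.im) := by
        convert h2 using 1; ring
      have hn2 : ¬ (l:ℤ) ∣ 2 := fun hh => hl2' (hh.mul_right _)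
      have hnp : ¬ (l:ℤ) ∣ p := fun hh => hl2' (hh.mul_left _)
      rcases hl'.dvd_or_dvd ((hl'.dvd_or_dvd h3).resolve_left hn2) with h5 | h5
      · refine ⟨h5, ?_⟩
        have : (l:ℤ) ∣ p * (x.im * x.im) := by
          have := (Int.dvd_add_right (h5.mul_right x.re)).mp h1
          rwa [mul_assoc] at this
        rcases hl'.dvd_or_dvd ((hl'.dvd_or_dvd this).resolve_left hnp) with h | h <;> exact h
      · refine ⟨?_, h5⟩
        have : (l:ℤ) ∣ x.re * x.re := (Int.dvd_add_left (h5.mul_left _)).mp h1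
        rcases hl'.dvd_or_dvd this with h | h <;> exact h
    have h6 : (m : ℤ√(p:ℤ)) ∈ (Ideal.span {((l:ℤ) : ℤ√(p:ℤ))}) ^ 2 := by
      apply Ideal.pow_right_mono hbl 2
      rw [h]; exact Ideal.mem_span_singleton_self _
    rw [Ideal.span_singleton_pow, Ideal.mem_span_singleton, ← Int.cast_pow,
      Zsqrtd.intCast_dvd_intCast, pow_two] at h6
    exact hl'.not_isUnit (hm _ h6)
  have h1 : m.natAbs ∣ 2 * p := by
    rw [← Nat.prod_primeFactors_of_squarefree hm']
    refine dvd_trans (Finset.prod_dvd_prod_of_subset _ (2 * p).primeFactors _ ?_)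
      (Nat.prod_primeFactors_dvd _)
    intro l hl
    rw [Nat.mem_primeFactors] at hl ⊢
    exact ⟨hl.1, key l hl.1 hl.2.1, mul_ne_zero two_ne_zero hp.ne_zero⟩
  exact Int.natAbs_dvd_natAbs.mp (by simpa [Int.natAbs_mul] using h1)

theorem L {p : ℕ} (hp : p.Prime) (h4 : p % 4 = 3) [IsDedekindDomain (ℤ√(p:ℤ))]
    {C C' w β e π : ℤ√(p:ℤ)} (hw : IsUnit w) (hc : IsCoprime C C') (hC : C ≠ 0)
    (h : C * C' = w * β ^ 2) (he : IsUnit e) (hπ : 2 * e = π ^ 2) :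
    ∃ w D E : ℤ√(p:ℤ), IsUnit w ∧ E ≠ 0 ∧ C * E ^ 2 = w * D ^ 2 := by
  have ha := sq_ideal hw hc h
  set 𝔞 := Ideal.span {C, β}
  obtain ⟨n, hn⟩ : ∃ n : ℕ, C.norm.natAbs = n ^ 2 := by
    refine ⟨Ideal.absNorm 𝔞, ?_⟩
    rw [← map_pow, ha, Ideal.absNorm_span_singleton, algNorm]
  have hn0 : n ≠ 0 := by
    rintro rfl
    exact norm_ne_zero hp hC (by simpa using hn)
  have hN : C.norm = (n:ℤ) ^ 2 := by
    rcases Int.natAbs_eq C.norm with h | h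
    · rw [h, hn]; simp
    · exfalso
      rw [hn, Zsqrtd.norm_def] at h
      have := no_neg_sq hp h4 (x := C.re) (y := C.im) (n := n) (by push_cast at h; linarith)
      exact hn0 (by exact_mod_cast this)
  have hr : ∃ (r : ℤ) (q z : ℤ√(p:ℤ)), q ≠ 0 ∧ z ≠ 0 ∧ r ≠ 0 ∧ C * q ^ 2 = r * z ^ 2 := by
    by_cases hCn : C + (n : ℤ√(p:ℤ)) = 0
    · exact ⟨-n, 1, 1, one_ne_zero, one_ne_zero, by simpa using hn0,
        by push_cast; linear_combination hCn⟩
    · have h0 := norm_ne_zero hp hCn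
      refine ⟨(C + (n : ℤ√(p:ℤ))).norm * n, ((C + (n : ℤ√(p:ℤ))).norm : ℤ√(p:ℤ)), C + n, by exact_mod_cast h0, hCn,
        mul_ne_zero h0 (by exact_mod_cast hn0), ?_⟩
      have h1 := Zsqrtd.norm_eq_mul_conj (C + (n : ℤ√(p:ℤ)))
      have h2 := Zsqrtd.norm_eq_mul_conj C
      rw [hN] at h2
      rw [star_add] at h1
      have h3 : star (n : ℤ√(p:ℤ)) = n := by simp
      rw [h3] at h1
      push_cast at h1 h2 ⊢
      linear_combination ((C + (n : ℤ√(p:ℤ))).norm : ℤ√(p:ℤ)) * C * h1 -  ((C + (n : ℤ√(p:ℤ))).norm : ℤ√(p:ℤ)) * (C+n) * h2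
  obtain ⟨r, q, z, hq, hz, hr0, hrqz⟩ := hr
  obtain ⟨m, f, hmf, hm⟩ : ∃ m f : ℤ, r = m * f ^ 2 ∧ Squarefree m := by
    obtain ⟨a, b, hab, ha⟩ := Nat.sq_mul_squarefree r.natAbs
    rcases Int.natAbs_eq r with h | h
    · exact ⟨a, b, by rw [h, ← hab]; push_cast; ring, Int.squarefree_natCast.mpr ha⟩
    · exact ⟨-a, b, by rw [h, ← hab]; push_cast; ring, by
        rw [← Int.squarefree_natAbs]; simpa using ha⟩
  have hf : f ≠ 0 := by rintro rfl; simp at hmf; exact hr0 hmf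
  have hmz : C * q ^ 2 = m * (f * z) ^ 2 := by rw [hrqz, hmf]; push_cast; ring
  have hfz : (f * z : ℤ√(p:ℤ)) ≠ 0 := mul_ne_zero (by exact_mod_cast hf) hz
  have hI : (𝔞 * Ideal.span {q}) ^ 2 = Ideal.span {(m : ℤ√(p:ℤ))} * (Ideal.span {(f * z : ℤ√(p:ℤ))}) ^ 2 := by
    rw [mul_pow, ha, Ideal.span_singleton_pow, Ideal.span_singleton_pow,
      Ideal.span_singleton_mul_span_singleton, Ideal.span_singleton_mul_span_singleton, hmz]
  have hd : Ideal.span {(f * z : ℤ√(p:ℤ))} ∣ 𝔞 * Ideal.span {q} := by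
    rw [← UniqueFactorizationMonoid.pow_dvd_pow_iff_dvd (two_ne_zero)]
    exact ⟨_, by rw [hI, mul_comm]⟩
  obtain ⟨𝔟, hb⟩ := hd
  have hb2 : 𝔟 ^ 2 = Ideal.span {(m : ℤ√(p:ℤ))} := by
    rw [hb, mul_pow, mul_comm] at hI
    exact mul_right_cancel₀ (pow_ne_zero 2 (by simpa using ⟨hf, hz⟩)) hI
  have hmd := int_sq_ideal hp hm hb2
  have hmd' : m.natAbs ∣ 2 * p := by
    have := Int.natAbs_dvd_natAbs.mpr hmd
    simpa [Int.natAbs_mul] using this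
  obtain ⟨e, rfl⟩ := he
  have hs : (Zsqrtd.sqrtd : ℤ√(p:ℤ)) ^ 2 = p := by rw [pow_two, Zsqrtd.dmuld]; simp
  have hfin : ∃ w' d : ℤ√(p:ℤ), IsUnit w' ∧ (m.natAbs : ℤ√(p:ℤ)) = w' * d ^ 2 := by
    obtain ⟨x, y, hx, hy, hxy⟩ := (Nat.dvd_mul).mp hmd'
    rw [← hxy]
    have h2 : (2 : ℤ√(p:ℤ)) = (↑e⁻¹ : ℤ√(p:ℤ)) * π ^ 2 := by rw [← hπ, mul_left_comm]; simp
    rcases (Nat.dvd_prime Nat.prime_two).mp hx with rfl | rfl <;>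
    rcases (Nat.dvd_prime hp).mp hy with rfl | rfl
    · exact ⟨1, 1, isUnit_one, by simp⟩
    · exact ⟨1, Zsqrtd.sqrtd, isUnit_one, by rw [hs]; simp⟩
    · exact ⟨_, π, Units.isUnit e⁻¹, by rw [← h2]; simp⟩
    · exact ⟨_, π * Zsqrtd.sqrtd, Units.isUnit e⁻¹, by rw [mul_pow, ← mul_assoc, ← h2, hs]; simp⟩
  obtain ⟨w', d, hw', hd⟩ := hfin
  rcases Int.natAbs_eq m with h | h
  · refine ⟨w', d * (f * z), q, hw', hq, ?_⟩
    rw [hmz, h, Int.cast_natCast, hd]; ring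
  · refine ⟨-w', d * (f * z), q, hw'.neg, hq, ?_⟩
    rw [hmz, h, Int.cast_neg, Int.cast_natCast, hd]; ring


theorem zmod8A : ∀ t1 t2 b1 b2 : ZMod 8, ∀ q : ZMod 8, (q = 1 ∨ q = -1) → 
    t1 ^ 2 - t2 ^ 2 - 4 = q * (b1 ^ 2 - b2 ^ 2) → 2 * t1 * t2 = q * (2 * b1 * b2) →
    4 * (t1 + t2) = 0 → 4 * t1 = 0 ∧ 4 * t2 = 0 ∧ 4 * b1 = 0 ∧ 4 * b2 = 0 := by
  decide +kernel

theorem zmod8B : ∀ t1 t2 b1 b2 : ZMod 8, ∀ q : ZMod 8, (q = 1 ∨ q = -1) → 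
    t1 ^ 2 - t2 ^ 2 - 1 = q * (b1 ^ 2 - b2 ^ 2) → 2 * t1 * t2 = q * (2 * b1 * b2) →
    4 * (t1 + t2) ≠ 0 → 4 * (t1 - 1) = 0 ∧ 4 * t2 = 0 ∧ 4 * b1 = 0 ∧ 4 * b2 = 0 := by
  decide +kernel

theorem four_mul_zmod8 (x : ℤ) : (4 * (x : ZMod 8) = 0) ↔ (2:ℤ) ∣ x := by
  have : (4 * (x : ZMod 8)) = ((4 * x : ℤ) : ZMod 8) := by push_cast; rfl
  rw [this, ZMod.intCast_zmod_eq_zero_iff_dvd]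
  constructor <;> intro h <;> push_cast at * <;> omega

/-- Coprimality to an integer from odd norm. -/
theorem coprime_of_odd {p : ℕ} (hmod : p % 16 = 15) {z : ℤ√(p:ℤ)} (hz : ¬ (2:ℤ) ∣ z.re + z.im) (k : ℕ) :
    IsCoprime z ((2:ℤ√(p:ℤ)) ^ k) := by
  have h1 : IsCoprime z.norm ((2:ℤ) ^ k) := by
    apply IsCoprime.pow_right
    rw [isCoprime_comm, Int.prime_two.coprime_iff_not_dvd, Zsqrtd.norm_def]
    intro h
    apply hz
    have h2 : (2:ℤ) ∣ (p - 1 : ℤ) := by omega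
    have h3 : (2:ℤ) ∣ (z.re + z.im) * (z.re - z.im) := by
      have := dvd_add h (h2.mul_right (z.im * z.im))
      have h5 : (z.re + z.im) * (z.re - z.im) =
        z.re * z.re - p * z.im * z.im + (p - 1) * (z.im * z.im) := by ring
      rw [h5]; exact this
    rcases Int.prime_two.dvd_or_dvd h3 with h | h <;> omega
  have h2 := h1.map (Int.castRingHom (ℤ√(p:ℤ)))
  simp only [eq_intCast, Int.cast_pow, Int.cast_ofNat, Zsqrtd.norm_eq_mul_conj] at h2
  exact h2.of_mul_left_left

/-- the prime `√p` -/
theorem split_sqrt {p : ℕ} (hp : p.Prime) (h4 : p % 4 = 3) [IsDedekindDomain (ℤ√(p:ℤ))]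
    {C C' β e π : ℤ√(p:ℤ)} (hc : IsCoprime C C') (hC : C ≠ 0)
    (h : C * C' = e * Zsqrtd.sqrtd * β ^ 2) (he : IsUnit e) (hπ : 2 * e = π ^ 2) :
    ∃ w D E : ℤ√(p:ℤ), IsUnit w ∧ E ≠ 0 ∧
      (C * E ^ 2 = w * D ^ 2 ∨ C * E ^ 2 = w * Zsqrtd.sqrtd * D ^ 2) := by
  have hpp : Prime (p:ℤ) := Nat.prime_iff_prime_int.mp hp
  have hs0 : (Zsqrtd.sqrtd : ℤ√(p:ℤ)) ≠ 0 := by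
    intro h; have := congrArg Zsqrtd.im h; simp at this
  have hdiv : ∀ z : ℤ√(p:ℤ), (p:ℤ) ∣ z.re → ∃ z', z = Zsqrtd.sqrtd * z' := by
    rintro z ⟨r, hr⟩
    exact ⟨⟨z.im, r⟩, by ext <;> simp [hr]⟩
  have h1 : (p:ℤ) ∣ C.re * C'.re := by
    have := congrArg Zsqrtd.re h
    rw [mul_comm e, mul_assoc, Zsqrtd.re_mul, Zsqrtd.re_mul] at this
    simp only [Zsqrtd.re_sqrtd, Zsqrtd.im_sqrtd] at this
    exact ⟨(e * β ^ 2).im - C.im * C'.im, by linear_combination this⟩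
  rcases hpp.dvd_or_dvd h1 with h2 | h2
  · obtain ⟨C1, rfl⟩ := hdiv _ h2
    have hC1 : C1 ≠ 0 := right_ne_zero_of_mul hC
    have h3 : C1 * C' = e * β ^ 2 := mul_left_cancel₀ hs0 (by linear_combination h)
    obtain ⟨w, D, E, hw, hE, h5⟩ := L hp h4 he hc.of_mul_left_right hC1 h3 he hπ
    exact ⟨w, D, E, hw, hE, Or.inr (by linear_combination Zsqrtd.sqrtd * h5)⟩
  · obtain ⟨C1, rfl⟩ := hdiv _ h2
    have h3 : C * C1 = e * β ^ 2 := mul_left_cancel₀ hs0 (by linear_combination h)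
    obtain ⟨w, D, E, hw, hE, h5⟩ := L hp h4 he hc.of_mul_right_right hC h3 he hπ
    exact ⟨w, D, E, hw, hE, Or.inl h5⟩

theorem mainP {p : ℕ} (hp : p.Prime) (hmod : p % 16 = 15) [IsDedekindDomain (ℤ√(p:ℤ))]
    {x y : ℤ} (hxy : x ^ 2 - p * y ^ 2 = 2) {e t b : ℤ√(p:ℤ)} (he : e = ⟨x ^ 2 - 1, x * y⟩)
    (hu : IsUnit e) (h : t ^ 2 - 4 = e * Zsqrtd.sqrtd * b ^ 2) (ht : t + 2 ≠ 0) :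
    ∃ w D E : ℤ√(p:ℤ), IsUnit w ∧ E ≠ 0 ∧
      ((t + 2) * E ^ 2 = w * D ^ 2 ∨ (t + 2) * E ^ 2 = w * Zsqrtd.sqrtd * D ^ 2) := by
  have h4 : p % 4 = 3 := by omega
  have hπ : 2 * e = (⟨x, y⟩ : ℤ√(p:ℤ)) ^ 2 := by
    rw [he]; ext <;> simp [pow_two]
    · linear_combination hxy
    · ring
  have h16 : (p:ℤ) % 16 = 15 := by omega
  have hpm : ((p:ℤ) : ZMod 16) = -1 := by
    have : ((p + 1 : ℤ) : ZMod 16) = 0 := by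
      rw [ZMod.intCast_zmod_eq_zero_iff_dvd]; push_cast; omega
    push_cast at this ⊢
    linear_combination this
  have hz16 : ∀ x y : ZMod 16, x ^ 2 + y ^ 2 = 2 →
      2 * (x ^ 2 - 1) = 0 ∧ (2 * (x * y - 1) = 0 ∨ 2 * (x * y + 1) = 0) := by decide +kernel
  have hxy16 := hz16 x y (by
    have := congrArg (Int.cast : ℤ → ZMod 16) hxy
    push_cast at this hpm
    rw [hpm] at this
    linear_combination this)
  have conv : ∀ z : ℤ, (2 * (z : ZMod 16) = 0) → (z : ZMod 8) = 0 := by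
    intro z hz
    have : ((2 * z : ℤ) : ZMod 16) = 0 := by push_cast; exact hz
    rw [ZMod.intCast_zmod_eq_zero_iff_dvd] at this ⊢
    push_cast at *; omega
  have hX : ((x ^ 2 - 1 : ℤ) : ZMod 8) = 0 := conv _ (by push_cast; exact hxy16.1)
  have hp8 : ((p:ℤ) : ZMod 8) = -1 := by
    have : ((p + 1 : ℤ) : ZMod 8) = 0 := by
      rw [ZMod.intCast_zmod_eq_zero_iff_dvd]; push_cast; omega
    push_cast at this ⊢
    linear_combination this
  have hQ : ((p * (x * y) : ℤ) : ZMod 8) = 1 ∨ ((p * (x * y) : ℤ) : ZMod 8) = -1 := by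
    rw [Int.cast_mul, hp8]
    rcases hxy16.2 with h | h
    · right
      have := conv (x * y - 1) (by push_cast; exact h)
      push_cast at this ⊢; linear_combination -this
    · left
      have := conv (x * y + 1) (by push_cast; exact h)
      push_cast at this ⊢; linear_combination -this
  have hes : e * Zsqrtd.sqrtd = ⟨p * (x * y), x ^ 2 - 1⟩ := by rw [he]; ext <;> simp
  -- congruences
  have cong : ∀ (c : ℤ) (t b : ℤ√(p:ℤ)), t ^ 2 - (c : ℤ√(p:ℤ)) = e * Zsqrtd.sqrtd * b ^ 2 →
      ((t.re : ZMod 8) ^ 2 - (t.im : ZMod 8) ^ 2 - c =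
        ((p * (x * y) : ℤ) : ZMod 8) * ((b.re : ZMod 8) ^ 2 - (b.im : ZMod 8) ^ 2)) ∧
      (2 * (t.re : ZMod 8) * (t.im : ZMod 8) =
        ((p * (x * y) : ℤ) : ZMod 8) * (2 * (b.re : ZMod 8) * (b.im : ZMod 8))) := by
    intro c t b h
    rw [hes] at h
    have h1 := congrArg (fun z => ((z.re : ℤ) : ZMod 8)) h
    have h2 := congrArg (fun z => ((z.im : ℤ) : ZMod 8)) h
    simp only [pow_two, Zsqrtd.re_mul, Zsqrtd.im_mul, Zsqrtd.re_sub, Zsqrtd.im_sub,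
      Zsqrtd.re_intCast, Zsqrtd.im_intCast] at h1 h2
    push_cast at h1 h2 hX hp8 ⊢
    rw [hp8] at h1 h2 ⊢
    constructor
    · linear_combination h1 - (2 * (b.re : ZMod 8) * (b.im : ZMod 8)) * hX
    · linear_combination h2 + ((b.re : ZMod 8) ^ 2 - (b.im : ZMod 8) ^ 2) * hX
  have div2 : ∀ z : ℤ√(p:ℤ), (2:ℤ) ∣ z.re → (2:ℤ) ∣ z.im → ∃ z', z = 2 * z' := by
    rintro z h1 h2
    have := (Zsqrtd.intCast_dvd 2 z).mpr ⟨h1, h2⟩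
    simpa [dvd_def] using this
  have h20 : (2 : ℤ√(p:ℤ)) ≠ 0 := two_ne_zero
  by_cases hodd : (2:ℤ) ∣ t.re + t.im
  · -- even case
    obtain ⟨c1, c2⟩ := cong 4 t b (by push_cast; exact h)
    have := zmod8A _ _ _ _ _ hQ (by exact_mod_cast c1) c2
      (by rw [← Int.cast_add, four_mul_zmod8]; exact hodd)
    simp only [four_mul_zmod8] at this
    obtain ⟨t', rfl⟩ := div2 t this.1 this.2.1
    obtain ⟨b', rfl⟩ := div2 b this.2.2.1 this.2.2.2
    have h' : t' ^ 2 - 1 = e * Zsqrtd.sqrtd * b' ^ 2 :=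
      mul_left_cancel₀ (mul_ne_zero h20 h20) (by linear_combination h)
    by_cases hodd' : (2:ℤ) ∣ t'.re + t'.im
    · skip
      have hcop : IsCoprime (t' + 1) (t' - 1) := by
        have := coprime_of_odd hmod (z := t' + 1) (by simp; omega) 1
        rw [pow_one] at this
        have h2 := (IsCoprime.neg_right this).add_mul_left_right 1
        have h3 : t' - 1 = -2 + (t' + 1) * 1 := by ring
        rw [h3]; exact h2
      obtain ⟨w, D, E, hw, hE, h5⟩ := split_sqrt hp h4 (C := t' + 1) (C' := t' - 1) (β := b') hcop
        (fun h0 => ht (by linear_combination 2 * h0)) (by linear_combination h') hu hπ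
      obtain ⟨e, rfl⟩ := hu
      have h2 : (2 : ℤ√(p:ℤ)) = (↑e⁻¹ : ℤ√(p:ℤ)) * (⟨x, y⟩ : ℤ√(p:ℤ)) ^ 2 := by
        rw [← hπ, mul_left_comm]; simp
      refine ⟨(↑e⁻¹ : ℤ√(p:ℤ)) * w, (⟨x, y⟩ : ℤ√(p:ℤ)) * D, E, e⁻¹.isUnit.mul hw, hE, ?_⟩
      rcases h5 with h5 | h5
      · left
        linear_combination 2 * h5 + w * D ^ 2 * h2
      · right
        linear_combination 2 * h5 + w * Zsqrtd.sqrtd * D ^ 2 * h2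
    · obtain ⟨c1, c2⟩ := cong 1 t' b' (by push_cast; exact h')
      have := zmod8B _ _ _ _ _ hQ (by exact_mod_cast c1) c2
        (by rw [← Int.cast_add, Ne, four_mul_zmod8]; exact hodd')
      have h1 := this.1
      rw [← Int.cast_one, ← Int.cast_sub, four_mul_zmod8] at h1
      simp only [four_mul_zmod8] at this
      obtain ⟨b'', rfl⟩ := div2 b' this.2.2.1 this.2.2.2
      obtain ⟨τ, hτ⟩ := div2 (t' - 1) (by simpa using h1) (by simpa using this.2.1)
      obtain rfl : t' = 2 * τ + 1 := by linear_combination hτ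
      have h'' : (τ + 1) * τ = e * Zsqrtd.sqrtd * b'' ^ 2 :=
        mul_left_cancel₀ (mul_ne_zero h20 h20) (by linear_combination h')
      obtain ⟨w, D, E, hw, hE, h5⟩ := split_sqrt hp h4 (C := τ + 1) (C' := τ) (β := b'')
        ⟨1, -1, by ring⟩
        (fun h0 => ht (by linear_combination 4 * h0)) h'' hu hπ
      refine ⟨w, 2 * D, E, hw, hE, ?_⟩
      rcases h5 with h5 | h5
      · left; linear_combination 4 * h5
      · right; linear_combination 4 * h5
  · have hcop : IsCoprime (t + 2) (t - 2) := by
      have := coprime_of_odd hmod (z := t + 2) (by simp; omega) 2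
      have h2 := (IsCoprime.neg_right this).add_mul_left_right 1
      have h3 : t - 2 = -2 ^ 2 + (t + 2) * 1 := by ring
      rw [h3]; exact h2
    exact split_sqrt hp h4 (β := b) hcop ht (by linear_combination h) hu hπ

noncomputable def io (p : ℕ) : ℤ√(p:ℤ) →+* ℝ :=
  Zsqrtd.lift ⟨√(p:ℝ), by rw [Real.mul_self_sqrt (by positivity)]; simp⟩

theorem io_apply (p : ℕ) (z : ℤ√(p:ℤ)) : io p z = z.re + z.im * √(p:ℝ) := by
  simp [io, Zsqrtd.lift]

theorem prime_ne_sq {p : ℕ} (hp : p.Prime) (n : ℤ) : (p:ℤ) ≠ n * n := by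
  intro h
  have := (Nat.prime_iff_prime_int.mp hp).irreducible
  rw [h] at this
  rcases this.isUnit_or_isUnit rfl with h1 | h1 <;>
  · exact this.not_isUnit (h1.mul h1)

theorem io_inj {p : ℕ} (hp : p.Prime) : Function.Injective (io p) :=
  Zsqrtd.lift_injective _ (prime_ne_sq hp)

theorem io_sqrtd (p : ℕ) : io p Zsqrtd.sqrtd = √(p:ℝ) := by
  simp [io_apply]

theorem lin_indep {p : ℕ} (hp : p.Prime) {a b : ℚ} (h : (a:ℝ) + b * √(p:ℝ) = 0) : a = 0 ∧ b = 0 := by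
  by_cases hb : b = 0
  · subst hb; simp at h; exact ⟨h, rfl⟩
  · exfalso
    have hirr := hp.irrational_sqrt
    apply hirr
    refine ⟨-a / b, ?_⟩
    have hb' : (b:ℝ) ≠ 0 := by exact_mod_cast hb
    push_cast
    field_simp
    linarith

theorem mem_adjoin_sq {F : IntermediateField ℚ ℝ} {α : ℝ} (hα : IsAlgebraic ℚ α) (h2 : α ^ 2 ∈ F) {x : ℝ}
    (hx : x ∈ ℚ⟮α⟯) : ∃ A ∈ F, ∃ B ∈ F, x = A + B * α := by
  have h1 : x ∈ (ℚ⟮α⟯).toSubalgebra := hx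
  rw [IntermediateField.adjoin_simple_toSubalgebra_of_isAlgebraic hα,
    Algebra.adjoin_singleton_eq_range_aeval] at h1
  obtain ⟨f, hf⟩ := h1
  subst hf
  induction f using Polynomial.induction_on' with
  | add f g hf hg =>
    obtain ⟨A, hA, B, hB, h⟩ := hf (by
      exact (Algebra.adjoin_singleton_eq_range_aeval ℚ α ▸ IntermediateField.algebra_adjoin_le_adjoin ℚ {α}) ⟨f, rfl⟩)
    obtain ⟨A', hA', B', hB', h'⟩ := hg (by
      exact (Algebra.adjoin_singleton_eq_range_aeval ℚ α ▸ IntermediateField.algebra_adjoin_le_adjoin ℚ {α}) ⟨g, rfl⟩)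
    refine ⟨A + A', F.add_mem hA hA', B + B', F.add_mem hB hB', ?_⟩
    simp only [map_add] at *
    rw [h, h']; ring
  | monomial n a =>
    clear hx
    have : ∀ n : ℕ, ∃ A ∈ F, ∃ B ∈ F, α ^ n = A + B * α := by
      intro n
      induction n with
      | zero => exact ⟨1, F.one_mem, 0, F.zero_mem, by simp⟩
      | succ n ih =>
        obtain ⟨A, hA, B, hB, h⟩ := ih
        exact ⟨B * α ^ 2, F.mul_mem hB h2, A, hA, by rw [pow_succ, h]; ring⟩
    obtain ⟨A, hA, B, hB, h⟩ := this n
    refine ⟨algebraMap ℚ ℝ a * A, F.mul_mem (F.algebraMap_mem a) hA, algebraMap ℚ ℝ a * B, F.mul_mem (F.algebraMap_mem a) hB, ?_⟩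
    change Polynomial.aeval α (Polynomial.monomial n a) = _
    rw [Polynomial.aeval_monomial, h]; ring

theorem isInt_s (p : ℕ) : IsIntegral ℤ (√(p:ℝ)) := by
  apply IsIntegral.of_pow (n := 2) (by norm_num)
  rw [Real.sq_sqrt (by positivity)]
  exact_mod_cast (isIntegral_algebraMap (R := ℤ) (A := ℝ) (x := (p:ℤ)))

theorem isInt_io (p : ℕ) (z : ℤ√(p:ℤ)) : IsIntegral ℤ (io p z) := by
  rw [io_apply]
  exact (isIntegral_algebraMap (R := ℤ) (A := ℝ) (x := z.re)).add
    ((isIntegral_algebraMap (R := ℤ) (A := ℝ) (x := z.im)).mul (isInt_s p))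

theorem io_mem (p : ℕ) (z : ℤ√(p:ℤ)) : io p z ∈ ℚ⟮√(p:ℝ)⟯ := by
  rw [io_apply]
  refine add_mem ?_ (mul_mem ?_ (mem_adjoin_simple_self ℚ _)) <;> exact intCast_mem _ _

theorem mem_k {p : ℕ} {x : ℝ} (hx : x ∈ ℚ⟮√(p:ℝ)⟯) : ∃ a b : ℚ, x = a + b * √(p:ℝ) := by
  obtain ⟨A, hA, B, hB, h⟩ := mem_adjoin_sq (F := ⊥) ((isInt_s p).tower_top (A := ℚ)).isAlgebraic
    (by rw [Real.sq_sqrt (by positivity)]; exact _root_.natCast_mem _ p) hx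
  rw [IntermediateField.mem_bot] at hA hB
  obtain ⟨a, rfl⟩ := hA
  obtain ⟨b, rfl⟩ := hB
  exact ⟨a, b, by simpa using h⟩

theorem conj_poly (p : ℕ) (a b : ℚ) (f : Polynomial ℤ) : ∃ A B : ℚ,
    Polynomial.aeval ((a:ℝ) + b * √(p:ℝ)) f = A + B * √(p:ℝ) ∧
    Polynomial.aeval ((a:ℝ) - b * √(p:ℝ)) f = A - B * √(p:ℝ) := by
  have hs : √(p:ℝ) * √(p:ℝ) = p := Real.mul_self_sqrt (by positivity)
  induction f using Polynomial.induction_on' with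
  | add f g hf hg =>
    obtain ⟨A, B, h1, h2⟩ := hf
    obtain ⟨A', B', h1', h2'⟩ := hg
    refine ⟨A + A', B + B', ?_, ?_⟩ <;> simp only [map_add, h1, h2, h1', h2'] <;> push_cast <;> ring
  | monomial n c =>
    have : ∃ A B : ℚ, ((a:ℝ) + b * √(p:ℝ)) ^ n = A + B * √(p:ℝ) ∧ ((a:ℝ) - b * √(p:ℝ)) ^ n = A - B * √(p:ℝ) := by
      induction n with
      | zero => exact ⟨1, 0, by simp, by simp⟩
      | succ n ih =>
        obtain ⟨A, B, h1, h2⟩ := ih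
        refine ⟨A * a + B * b * p, A * b + B * a, ?_, ?_⟩
        · rw [pow_succ, h1]; push_cast; linear_combination (B * b : ℝ) * hs
        · rw [pow_succ, h2]; push_cast; linear_combination (B * b : ℝ) * hs
    obtain ⟨A, B, h1, h2⟩ := this
    refine ⟨c * A, c * B, ?_, ?_⟩
    · rw [Polynomial.aeval_monomial, h1]; simp; ring
    · rw [Polynomial.aeval_monomial, h2]; simp; ring

theorem rat_int {q : ℚ} {x : ℝ} (hx : x = q) (h : IsIntegral ℤ x) : ∃ m : ℤ, q = m := by
  subst hx
  have h' : IsIntegral ℤ (algebraMap ℚ ℝ q) := by simpa using h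
  rw [isIntegral_algebraMap_iff (algebraMap ℚ ℝ).injective] at h'
  obtain ⟨m, hm⟩ := IsIntegrallyClosed.isIntegral_iff.mp h'
  exact ⟨m, by simpa using hm.symm⟩

theorem int_k {p : ℕ} (hp : p.Prime) (h4 : p % 4 = 3) {x : ℝ} (hx : x ∈ ℚ⟮√(p:ℝ)⟯) (hi : IsIntegral ℤ x) :
    ∃ z, x = io p z := by
  have hs : √(p:ℝ) * √(p:ℝ) = p := Real.mul_self_sqrt (by positivity)
  obtain ⟨a, b, rfl⟩ := mem_k hx
  have hi' : IsIntegral ℤ ((a:ℝ) - b * √(p:ℝ)) := by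
    obtain ⟨f, hf, h0⟩ := hi
    obtain ⟨A, B, h1, h2⟩ := conj_poly p a b f
    refine ⟨f, hf, ?_⟩
    rw [← Polynomial.aeval_def] at *
    rw [h1] at h0
    obtain ⟨rfl, rfl⟩ := lin_indep hp h0
    rw [h2]; simp
  obtain ⟨m, hm⟩ := rat_int (q := 2 * a) (by push_cast; ring) (hi.add hi')
  obtain ⟨n, hn⟩ := rat_int (q := a ^ 2 - p * b ^ 2) (by push_cast; linear_combination (-b^2:ℝ) * hs) (hi.mul hi')
  have h5 : (p * (2 * b)) ^ 2 = ((p * (m ^ 2 - 4 * n) : ℤ) : ℚ) := by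
    push_cast; rw [← hm, ← hn]; ring
  obtain ⟨g, hg⟩ := rat_int (q := p * (2 * b)) rfl (by
    apply IsIntegral.of_pow (n := 2) (by norm_num)
    have : (((p * (2 * b) : ℚ)) : ℝ) ^ 2 = algebraMap ℤ ℝ (p * (m ^ 2 - 4 * n)) := by
      have := congrArg (fun q : ℚ => (q : ℝ)) h5
      push_cast at this ⊢
      simpa using this
    rw [this]; exact isIntegral_algebraMap)
  rw [hg] at h5
  have h6 : g ^ 2 = p * (m ^ 2 - 4 * n) := by exact_mod_cast h5
  have hpg : (p:ℤ) ∣ g := (Nat.prime_iff_prime_int.mp hp).dvd_of_dvd_pow ⟨_, h6⟩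
  obtain ⟨B, rfl⟩ := hpg
  have hp0 : (p:ℚ) ≠ 0 := by exact_mod_cast hp.ne_zero
  have hB : 2 * b = B := by
    apply mul_left_cancel₀ hp0; rw [hg]; push_cast; ring
  have h7 : m ^ 2 - p * B ^ 2 = 4 * n := by
    have hp0 : (p:ℤ) ≠ 0 := by exact_mod_cast hp.ne_zero
    apply mul_left_cancel₀ hp0; linear_combination -h6
  have hpp : ∃ q : ℤ, (p:ℤ) = 4 * q + 3 := ⟨(p:ℤ) / 4, by omega⟩
  obtain ⟨q, hq⟩ := hpp
  rw [hq] at h7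
  have : (∃ m', m = 2 * m') ∧ ∃ B', B = 2 * B' := by
    rcases Int.even_or_odd' m with ⟨m', rfl | rfl⟩ <;> rcases Int.even_or_odd' B with ⟨B', rfl | rfl⟩
    · exact ⟨⟨_, rfl⟩, ⟨_, rfl⟩⟩
    all_goals exfalso; ring_nf at h7; omega
  obtain ⟨⟨m', rfl⟩, ⟨B', rfl⟩⟩ := this
  refine ⟨⟨m', B'⟩, ?_⟩
  have e1 : a = m' := by push_cast at hm; linarith
  have e2 : b = B' := by push_cast at hB; linarith
  rw [io_apply, e1, e2]; simp

theorem dedekind {p : ℕ} (hp : p.Prime) (h4 : p % 4 = 3) : IsDedekindDomain (ℤ√(p:ℤ)) := by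
  let k := ℚ⟮√(p:ℝ)⟯
  haveI : FiniteDimensional ℚ k := adjoin.finiteDimensional ((isInt_s p).tower_top (A := ℚ))
  let f : ℤ√(p:ℤ) →+* k := (io p).codRestrict k.toSubfield.toSubring (io_mem p)
  letI : Algebra (ℤ√(p:ℤ)) k := f.toAlgebra
  haveI : IsIntegralClosure (ℤ√(p:ℤ)) ℤ k := 
  { algebraMap_injective := by
      intro x y h
      exact io_inj hp (congrArg Subtype.val h)
    isIntegral_iff := by
      intro x
      have hx : IsIntegral ℤ x ↔ IsIntegral ℤ (x:ℝ) := 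
        (isIntegral_algebraMap_iff (A := k) (B := ℝ) (R := ℤ) (algebraMap k ℝ).injective).symm
      rw [hx]
      constructor
      · intro h
        obtain ⟨z, hz⟩ := int_k hp h4 x.2 h
        exact ⟨z, Subtype.ext hz.symm⟩
      · rintro ⟨z, rfl⟩
        exact isInt_io p z }
  haveI : IsDomain (ℤ√(p:ℤ)) := Function.Injective.isDomain (io p) (io_inj hp)
  exact IsIntegralClosure.isDedekindDomain ℤ ℚ k (ℤ√(p:ℤ))
theorem group_part {G : Type*} [CommGroup G] (v : G →* ℝ) (hv : Function.Injective v) (S : G →* G)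
    (ε m η₀ u : G) (hm : v m = -1) (hSm : S m = m) (hε : 1 < v ε) (hSε : S ε = ε)
    (hN : ∀ η, ∃ j : ℤ, η * S η = ε ^ j)
    (h1 : 1 < v η₀) (h2 : η₀ * S η₀ = 1) (h3 : ∀ η, 1 < v η → η * S η = 1 → v η₀ ≤ v η)
    (j : ℤ) (hu : u ^ 2 = η₀ * ε ^ j) :
    ∃ ξ, 0 < v ξ ∧ 0 < v (S ξ) ∧ ξ * S ξ = ε ∧ Subgroup.closure {m, ξ, S ξ} = ⊤ := by
  have hne : ∀ g, v g ≠ 0 := fun g h => by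
    have := v.map_one; rw [← mul_inv_cancel g, map_mul, h, zero_mul] at this; exact one_ne_zero this.symm
  have vinv : ∀ g, v g⁻¹ = (v g)⁻¹ := fun g => by
    apply eq_inv_of_mul_eq_one_left; rw [← map_mul]; simp
  have vz : ∀ g (n : ℤ), v (g ^ n) = (v g) ^ n := fun g n => map_zpow' v vinv g n
  have hm2 : m * m = 1 := hv (by simp [hm])
  have εinj : ∀ i j : ℤ, ε ^ i = ε ^ j → i = j := fun i j h => by
    have := congrArg v h; rw [vz, vz] at this
    exact zpow_right_injective₀ (by linarith) hε.ne' this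
  have hNu : u * S u = ε ^ j := by
    obtain ⟨i, hi⟩ := hN u
    have : (u * S u) ^ 2 = ε ^ (2 * j) := by
      have := congrArg S hu
      rw [map_pow, map_mul, map_zpow, hSε] at this
      rw [mul_pow, hu, this, mul_mul_mul_comm, h2, one_mul, ← zpow_add]; congr 1; ring
    rw [hi, ← zpow_natCast, ← zpow_mul] at this
    have := εinj _ _ this
    rw [hi]; congr 1; push_cast at this; linarith
  have hsgn : ∀ g, ∃ g', 0 < v g' ∧ (g' = g ∨ g' = m * g) := fun g => by
    rcases lt_or_gt_of_ne (hne g) with h | h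
    · exact ⟨m * g, by rw [map_mul, hm]; linarith, Or.inr rfl⟩
    · exact ⟨g, h, Or.inl rfl⟩
  obtain ⟨i, hi⟩ := Int.even_or_odd' j
  have hodd : j = 2 * i + 1 := by
    rcases hi with hi | hi
    · exfalso
      obtain ⟨w, hw, hw'⟩ := hsgn (u * ε ^ (-i))
      have hw2 : w ^ 2 = η₀ := by
        have : (u * ε ^ (-i)) ^ 2 = η₀ := by
          rw [mul_pow, hu, hi, ← zpow_natCast (ε ^ (-i)), ← zpow_mul, mul_assoc, ← zpow_add]
          norm_num
          ring_nf; simp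
        rcases hw' with rfl | rfl
        · exact this
        · rw [mul_pow, this, pow_two, hm2, one_mul]
      have hw3 : w * S w = 1 := by
        have : (u * ε ^ (-i)) * S (u * ε ^ (-i)) = 1 := by
          rw [map_mul, map_zpow, hSε, mul_mul_mul_comm, hNu, hi, ← zpow_add, ← zpow_add]
          ring_nf; simp
        rcases hw' with rfl | rfl
        · exact this
        · rw [map_mul, hSm, mul_mul_mul_comm, this, hm2, one_mul]
      have hw4 : v w ^ 2 = v η₀ := by rw [← map_pow, hw2]
      have hw5 : 1 < v w := by nlinarith
      have := h3 w hw5 hw3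
      nlinarith
    · exact hi
  obtain ⟨ξ, hξ, hξ'⟩ := hsgn (u * ε ^ (-i))
  have hN' : ξ * S ξ = ε := by
    have : (u * ε ^ (-i)) * S (u * ε ^ (-i)) = ε := by
      rw [map_mul, map_zpow, hSε, mul_mul_mul_comm, hNu, hodd, ← zpow_add, ← zpow_add]
      ring_nf; simp
    rcases hξ' with rfl | rfl
    · exact this
    · rw [map_mul, hSm, mul_mul_mul_comm, this, hm2, one_mul]
  have hsq : ξ ^ 2 = η₀ * ε := by
    have : (u * ε ^ (-i)) ^ 2 = η₀ * ε := by
      rw [mul_pow, hu, hodd, ← zpow_natCast (ε ^ (-i)), ← zpow_mul, mul_assoc, ← zpow_add]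
      push_cast
      ring_nf; simp
    rcases hξ' with rfl | rfl
    · exact this
    · rw [mul_pow, this, pow_two, hm2, one_mul]
  have hη₀ : η₀ = ξ * (S ξ)⁻¹ := by
    rw [eq_mul_inv_iff_mul_eq]
    have : ξ * (η₀ * S ξ) = ξ * ξ := by
      rw [mul_left_comm, hN', ← hsq, pow_two]
    exact mul_left_cancel this
  have hSξ : 0 < v (S ξ) := by
    have := congrArg v hN'
    rw [map_mul] at this
    by_contra h
    push Not at h
    nlinarith
  refine ⟨ξ, hξ, hSξ, hN', ?_⟩
  rw [eq_top_iff]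
  intro η _
  set H := Subgroup.closure {m, ξ, S ξ} with hH
  have hmH : m ∈ H := Subgroup.subset_closure (by simp)
  have hξH : ξ ∈ H := Subgroup.subset_closure (by simp)
  have hSH : S ξ ∈ H := Subgroup.subset_closure (by simp)
  obtain ⟨g, hg, hg'⟩ := hsgn η
  suffices hgH : g ∈ H by
    rcases hg' with rfl | rfl
    · exact hgH
    · exact (Subgroup.mul_mem_cancel_left H hmH).mp hgH
  obtain ⟨r, hr⟩ := hN g
  set y := g * ξ ^ (-r) with hy
  have hyv : 0 < v y := by rw [hy, map_mul, vz]; positivity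
  have hyN : y * S y = 1 := by
    rw [hy, map_mul, map_zpow, mul_mul_mul_comm, hr, ← mul_zpow, hN', ← zpow_add]; simp
  obtain ⟨n, hn1, hn2⟩ := exists_mem_Ico_zpow hyv h1
  have hη0 : 0 < v η₀ := by linarith
  set z := y * η₀ ^ (-n) with hz
  have hzN : z * S z = 1 := by
    rw [hz, map_mul, map_zpow, mul_mul_mul_comm, hyN, ← mul_zpow, h2]; simp
  have hzv : v z = v y / v η₀ ^ n := by
    rw [hz, map_mul, vz, zpow_neg]; rfl
  have hz1 : 1 ≤ v z := by rw [hzv, one_le_div (by positivity)]; exact hn1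
  have hz2 : v z < v η₀ := by
    rw [hzv, div_lt_iff₀ (by positivity), mul_comm, ← zpow_add_one₀ hη0.ne']; exact hn2
  have hz3 : z = 1 := by
    rcases hz1.eq_or_lt with h | h
    · exact hv (by rw [← h, map_one])
    · exact absurd (h3 z h hzN) (by linarith)
  have hg2 : g = η₀ ^ n * ξ ^ r := by
    rw [hz, hy] at hz3
    rw [zpow_neg, zpow_neg, mul_inv_eq_one, mul_inv_eq_iff_eq_mul] at hz3
    exact hz3
  rw [hg2, hη₀]
  exact H.mul_mem (H.zpow_mem (H.mul_mem hξH (H.inv_mem hSH)) _) (H.zpow_mem hξH _)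

theorem sqrt_mem {p : ℕ} : √(p:ℝ) ∈ ℚ⟮√(2 * √(p:ℝ))⟯ := by
  have h : √(2 * √(p:ℝ)) ^ 2 = 2 * √(p:ℝ) := Real.sq_sqrt (by positivity)
  have h2 : √(p:ℝ) = √(2 * √(p:ℝ)) ^ 2 / (2:ℕ) := by rw [h]; push_cast; ring
  have h3 : √(2 * √(p:ℝ)) ^ 2 / (2:ℕ) ∈ ℚ⟮√(2 * √(p:ℝ))⟯ := div_mem (pow_mem (mem_adjoin_simple_self ℚ _) 2) (_root_.natCast_mem _ 2)
  rwa [← h2] at h3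

theorem k_le {p : ℕ} : ℚ⟮√(p:ℝ)⟯ ≤ ℚ⟮√(2 * √(p:ℝ))⟯ := by
  rw [IntermediateField.adjoin_simple_le_iff]; exact sqrt_mem

theorem isInt_theta (p : ℕ) : IsIntegral ℤ (√(2 * √(p:ℝ))) := by
  apply IsIntegral.of_pow (n := 2) (by norm_num)
  rw [Real.sq_sqrt (by positivity)]
  exact (by simpa using isIntegral_algebraMap (R := ℤ) (A := ℝ) (x := 2) : IsIntegral ℤ (2:ℝ)).mul (isInt_s p)

theorem decomp {p : ℕ} {x : ℝ} (hx : x ∈ ℚ⟮√(2 * √(p:ℝ))⟯) :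
    ∃ A ∈ ℚ⟮√(p:ℝ)⟯, ∃ B ∈ ℚ⟮√(p:ℝ)⟯, x = A + B * √(2 * √(p:ℝ)) := by
  apply mem_adjoin_sq ((isInt_theta p).tower_top (A := ℚ)).isAlgebraic _ hx
  rw [Real.sq_sqrt (by positivity)]
  exact mul_mem (by exact ofNat_mem ℚ⟮√(p:ℝ)⟯ 2) (mem_adjoin_simple_self ℚ _)

/-- The data of the theorem, with the fields substituted. -/
structure Dat (p : ℕ) (K' : IntermediateField ℚ ℝ) (σ : K' ≃ₐ[ℚ] K') : Prop where
  hp : p.Prime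
  hmod : p % 16 = 15
  hK : K' = ℚ⟮√(2 * √(p:ℝ))⟯
  hσ : σ ≠ AlgEquiv.refl
  hσk : ∀ x : K', (x : ℝ) ∈ ℚ⟮√(p:ℝ)⟯ → σ x = x

variable {p : ℕ} {K' : IntermediateField ℚ ℝ} {σ : K' ≃ₐ[ℚ] K'}

theorem Dat.h4 (h : Dat p K' σ) : p % 4 = 3 := by have := h.hmod; omega

theorem Dat.kle (h : Dat p K' σ) : ℚ⟮√(p:ℝ)⟯ ≤ K' := by rw [h.hK]; exact k_le

theorem Dat.thetaMem (h : Dat p K' σ) : √(2 * √(p:ℝ)) ∈ K' := by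
  rw [h.hK]; exact mem_adjoin_simple_self ℚ _

theorem Dat.spos (h : Dat p K' σ) : 0 < √(p:ℝ) := Real.sqrt_pos.mpr (by exact_mod_cast h.hp.pos)

theorem Dat.thpos (h : Dat p K' σ) : 0 < √(2 * √(p:ℝ)) := Real.sqrt_pos.mpr (by linarith [h.spos])

theorem thsq (p : ℕ) : √(2 * √(p:ℝ)) ^ 2 = 2 * √(p:ℝ) := Real.sq_sqrt (by positivity)

theorem Dat.decompHom (h : Dat p K' σ) (x : K') : ∃ A B : K', (A:ℝ) ∈ ℚ⟮√(p:ℝ)⟯ ∧ (B:ℝ) ∈ ℚ⟮√(p:ℝ)⟯ ∧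
    x = A + B * ⟨_, h.thetaMem⟩ := by
  obtain ⟨A, hA, B, hB, hx⟩ := decomp (p := p) (x := x) (by rw [← h.hK]; exact x.2)
  exact ⟨⟨A, h.kle hA⟩, ⟨B, h.kle hB⟩, hA, hB, Subtype.ext hx⟩

theorem Dat.sigma_theta (h : Dat p K' σ) : σ ⟨_, h.thetaMem⟩ = -⟨_, h.thetaMem⟩ := by
  set T : K' := ⟨_, h.thetaMem⟩ with hT
  have hT2 : σ (T ^ 2) = T ^ 2 := by
    apply h.hσk
    have : ((T ^ 2 : K') : ℝ) = 2 * √(p:ℝ) := by push_cast; exact thsq p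
    rw [this]
    exact mul_mem (by exact ofNat_mem ℚ⟮√(p:ℝ)⟯ 2) (mem_adjoin_simple_self ℚ _)
  rw [map_pow] at hT2
  rcases sq_eq_sq_iff_eq_or_eq_neg.mp hT2 with h1 | h1
  · exfalso
    apply h.hσ
    ext x
    obtain ⟨A, B, hA, hB, hx⟩ := h.decompHom x
    rw [hx, map_add, map_mul, h.hσk A hA, h.hσk B hB, ← hT, h1]; rfl
  · exact h1

theorem Dat.sig (h : Dat p K' σ) (x : K') : ∃ A ∈ ℚ⟮√(p:ℝ)⟯, ∃ B ∈ ℚ⟮√(p:ℝ)⟯,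
    (x:ℝ) = A + B * √(2 * √(p:ℝ)) ∧ (σ x : ℝ) = A - B * √(2 * √(p:ℝ)) := by
  obtain ⟨A, B, hA, hB, hx⟩ := h.decompHom x
  refine ⟨A, hA, B, hB, by rw [hx]; rfl, ?_⟩
  rw [hx, map_add, map_mul, h.hσk A hA, h.hσk B hB, h.sigma_theta]
  push_cast; ring

theorem Dat.sigsig (h : Dat p K' σ) (x : K') : σ (σ x) = x := by
  obtain ⟨A, B, hA, hB, hx⟩ := h.decompHom x
  rw [hx]
  simp only [map_add, map_mul, map_neg, h.hσk A hA, h.hσk B hB, h.sigma_theta]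
  ring

theorem Dat.homs (h : Dat p K' σ) (φ : K' →+* ℝ) : (∀ x, φ x = (x:ℝ)) ∨ (∀ x, φ x = (σ x : ℝ)) := by
  set T : K' := ⟨_, h.thetaMem⟩ with hT
  set s : K' := ⟨√(p:ℝ), h.kle (mem_adjoin_simple_self ℚ _)⟩ with hs
  have hTs : T ^ 2 = 2 * s := Subtype.ext (by push_cast; exact thsq p)
  have hss : s ^ 2 = p := Subtype.ext (by push_cast; exact Real.sq_sqrt (by positivity))
  have h1 : φ T ^ 2 = 2 * φ s := by rw [← map_pow, hTs, map_mul, map_ofNat]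
  have h2 : φ s ^ 2 = p := by rw [← map_pow, hss, map_natCast]
  have h3 : φ s = √(p:ℝ) := by
    rw [← h2, Real.sqrt_sq]; nlinarith [sq_nonneg (φ T)]
  have h5 : φ T ^ 2 = √(2 * √(p:ℝ)) ^ 2 := by rw [h1, h3, thsq]
  have hk : ∀ A : K', (A:ℝ) ∈ ℚ⟮√(p:ℝ)⟯ → φ A = A := by
    intro A hA
    obtain ⟨a, b, hab⟩ := mem_k hA
    have : A = (a:K') + (b:K') * s := Subtype.ext (by push_cast; exact hab)
    rw [this, map_add, map_mul, map_ratCast, map_ratCast, h3]; push_cast; rfl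
  rcases sq_eq_sq_iff_eq_or_eq_neg.mp h5 with h6 | h6
  · left; intro x
    obtain ⟨A, B, hA, hB, hx⟩ := h.decompHom x
    rw [hx, map_add, map_mul, hk A hA, hk B hB, ← hT, h6]; rfl
  · right; intro x
    obtain ⟨A, B, hA, hB, hx⟩ := h.decompHom x
    rw [hx, map_add, map_mul, map_add, map_mul, hk A hA, hk B hB, ← hT, h6, h.hσk A hA, h.hσk B hB, h.sigma_theta]; rfl

theorem isInt_sigma {x : K'} (hx : IsIntegral ℤ (x:ℝ)) : IsIntegral ℤ (σ x : ℝ) := by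
  have hx' : ∀ x : K', IsIntegral ℤ x ↔ IsIntegral ℤ (x:ℝ) := fun x => 
        (isIntegral_algebraMap_iff (A := K') (B := ℝ) (R := ℤ) (algebraMap K' ℝ).injective).symm
  rw [← hx'] at hx ⊢
  exact hx.map (σ.toAlgHom.restrictScalars ℤ)

theorem Dat.tnb (h : Dat p K' σ) {a b : ℤ} (hab : a ^ 2 - p * b ^ 2 = 2) {x : K'} (hx : IsIntegral ℤ (x:ℝ)) :
    ∃ t n β : ℤ√(p:ℤ), (x:ℝ) + σ x = io p t ∧ (x:ℝ) * σ x = io p n ∧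
      t ^ 2 - 4 * n = (⟨a ^ 2 - 1, a * b⟩ : ℤ√(p:ℤ)) * Zsqrtd.sqrtd * β ^ 2 := by
  obtain ⟨A, hA, B, hB, h1, h2⟩ := h.sig x
  have hi := isInt_sigma (σ := σ) hx
  have hth := thsq p
  have hss : √(p:ℝ) ^ 2 = p := Real.sq_sqrt (by positivity)
  have h2k : (2:ℝ) ∈ ℚ⟮√(p:ℝ)⟯ := by exact ofNat_mem ℚ⟮√(p:ℝ)⟯ 2
  have hsk : √(p:ℝ) ∈ ℚ⟮√(p:ℝ)⟯ := mem_adjoin_simple_self ℚ _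
  obtain ⟨t, ht⟩ := int_k h.hp h.h4 (x := (x:ℝ) + σ x) (by
    have : (x:ℝ) + σ x = 2 * A := by rw [h1, h2]; ring
    rw [this]; exact mul_mem h2k hA) (hx.add hi)
  obtain ⟨n, hn⟩ := int_k h.hp h.h4 (x := (x:ℝ) * σ x) (by
    have : (x:ℝ) * σ x = A ^ 2 - B ^ 2 * (2 * √(p:ℝ)) := by rw [h1, h2]; linear_combination (-B ^ 2) * hth
    rw [this]; exact sub_mem (pow_mem hA 2) (mul_mem (pow_mem hB 2) (mul_mem h2k hsk))) (hx.mul hi)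
  set e : ℤ√(p:ℤ) := ⟨a ^ 2 - 1, a * b⟩ with he
  set π : ℤ√(p:ℤ) := ⟨a, b⟩ with hπ
  have hππ : π ^ 2 = 2 * e := by
    rw [Zsqrtd.ext_iff]; simp [pow_two, hπ, he]; constructor <;> nlinarith
  have hee : e * star e = 1 := by
    rw [Zsqrtd.ext_iff]; simp [he]
    constructor <;> nlinarith
  have hπ0 : io p π ≠ 0 := by
    intro h0
    rw [map_eq_zero_iff _ (io_inj h.hp), Zsqrtd.ext_iff] at h0
    simp [hπ] at h0
    rw [h0.1, h0.2] at hab; norm_num at hab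
  set β : ℝ := 4 * B / io p π with hβ
  have hβk : β * √(p:ℝ) ∈ ℚ⟮√(p:ℝ)⟯ := by
    refine mul_mem (div_mem (mul_mem ?_ hB) (io_mem p π)) hsk
    exact ofNat_mem ℚ⟮√(p:ℝ)⟯ 4
  have hπ2 : io p π ^ 2 = 2 * io p e := by rw [← map_pow, hππ, map_mul, map_ofNat]
  have he2 : io p e * io p (star e) = 1 := by rw [← map_mul, hee, map_one]
  have hβ2 : β ^ 2 * io p e * √(p:ℝ) = io p (t ^ 2 - 4 * n) := by
    have e1 : io p (t ^ 2 - 4 * n) = 8 * B ^ 2 * √(p:ℝ) := by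
      rw [map_sub, map_pow, map_mul, ← ht, ← hn, map_ofNat, h1, h2]
      linear_combination 4 * B ^ 2 * hth
    rw [e1, hβ, div_pow]
    field_simp
    linear_combination (-8) * B ^ 2 * √(p:ℝ) * hπ2
  have hint : (β * √(p:ℝ)) ^ 2 = io p (star e * Zsqrtd.sqrtd * (t ^ 2 - 4 * n)) := by
    rw [map_mul, map_mul, io_sqrtd, ← hβ2]
    linear_combination (-β ^ 2 * √(p:ℝ) ^ 2) * he2
  obtain ⟨g, hg⟩ := int_k h.hp h.h4 hβk (IsIntegral.of_pow (n := 2) (by norm_num) (by rw [hint]; exact isInt_io _ _))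
  rw [hg, ← map_pow] at hint
  have hg2 := io_inj h.hp hint
  have hpg : (p:ℤ) ∣ g.re := by
    apply (Nat.prime_iff_prime_int.mp h.hp).dvd_of_dvd_pow (n := 2)
    have h3 := congrArg Zsqrtd.re hg2
    set q := star e * (t ^ 2 - 4 * n) with hq
    have h6 : star e * Zsqrtd.sqrtd * (t ^ 2 - 4 * n) = Zsqrtd.sqrtd * q := by rw [hq]; ring
    rw [h6] at h3
    simp [pow_two] at h3
    exact ⟨q.im - g.im * g.im, by linarith⟩
  obtain ⟨c, hc⟩ := hpg
  have hgs : g = Zsqrtd.sqrtd * ⟨g.im, c⟩ := by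
    rw [Zsqrtd.ext_iff]; simp [hc]
  have hp0 := h.spos
  have hβc : β = io p ⟨g.im, c⟩ := by
    rw [hgs, map_mul, io_sqrtd] at hg
    exact mul_right_cancel₀ hp0.ne' (by linarith)
  refine ⟨t, n, ⟨g.im, c⟩, ht, hn, ?_⟩
  apply io_inj h.hp
  rw [← hβ2, hβc, map_mul, map_mul, map_pow, io_sqrtd]; ring

noncomputable def val (F : IntermediateField ℚ ℝ) : (𝓞 F)ˣ →* ℝ :=
  (((algebraMap F ℝ).comp (algebraMap (𝓞 F) F)) : 𝓞 F →* ℝ).comp (Units.coeHom (𝓞 F))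

theorem val_apply {F : IntermediateField ℚ ℝ} (u : (𝓞 F)ˣ) : val F u = (((u : 𝓞 F) : F) : ℝ) := rfl

theorem val_inj (F : IntermediateField ℚ ℝ) : Function.Injective (val F) := by
  intro a b h
  exact Units.ext (RingOfIntegers.ext (Subtype.ext h))

theorem val_neg {F : IntermediateField ℚ ℝ} (u : (𝓞 F)ˣ) : val F (-u) = -val F u := by
  simp [val_apply]

theorem val_ne {F : IntermediateField ℚ ℝ} (u : (𝓞 F)ˣ) : val F u ≠ 0 := by
  rw [val_apply]
  intro h
  have h1 : ((u : 𝓞 F) : F) = 0 := Subtype.ext h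
  have h2 : (u : 𝓞 F) = 0 := RingOfIntegers.ext h1
  exact u.ne_zero h2

theorem val_inv {F : IntermediateField ℚ ℝ} (u : (𝓞 F)ˣ) : val F u⁻¹ = (val F u)⁻¹ := by
  apply eq_inv_of_mul_eq_one_left; rw [← map_mul]; simp

theorem val_zpow {F : IntermediateField ℚ ℝ} (u : (𝓞 F)ˣ) (n : ℤ) : val F (u ^ n) = (val F u) ^ n :=
  map_zpow' (val F) val_inv u n

theorem isInt_iff {F : IntermediateField ℚ ℝ} (x : F) : IsIntegral ℤ x ↔ IsIntegral ℤ (x:ℝ) :=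
  (isIntegral_algebraMap_iff (A := F) (B := ℝ) (R := ℤ) (algebraMap F ℝ).injective).symm

theorem val_int {F : IntermediateField ℚ ℝ} (u : (𝓞 F)ˣ) : IsIntegral ℤ (val F u) :=
  (isInt_iff _).mp (u : 𝓞 F).2

theorem val_mem {F : IntermediateField ℚ ℝ} (u : (𝓞 F)ˣ) : val F u ∈ F := ((u : 𝓞 F) : F).2

theorem mk_unit {F : IntermediateField ℚ ℝ} {x y : ℝ} (hx : x ∈ F) (hxi : IsIntegral ℤ x) (hyi : IsIntegral ℤ y)
    (hxy : x * y = 1) : ∃ g, val F g = x := by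
  have hy : y ∈ F := by rw [eq_inv_of_mul_eq_one_right hxy]; exact F.inv_mem hx
  let X : 𝓞 F := ⟨⟨x, hx⟩, (isInt_iff _).mpr hxi⟩
  let Y : 𝓞 F := ⟨⟨y, hy⟩, (isInt_iff _).mpr hyi⟩
  have hXY : X * Y = 1 := RingOfIntegers.ext (Subtype.ext hxy)
  exact ⟨⟨X, Y, hXY, by rw [mul_comm]; exact hXY⟩, rfl⟩

theorem io_star (p : ℕ) (z : ℤ√(p:ℤ)) : io p (star z) = z.re - z.im * √(p:ℝ) := by
  simp [io_apply]; ring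

theorem io_mul_star (p : ℕ) (z : ℤ√(p:ℤ)) : io p z * io p (star z) = z.norm := by
  rw [io_star, io_apply, Zsqrtd.norm_def]
  have : √(p:ℝ) * √(p:ℝ) = p := Real.mul_self_sqrt (by positivity)
  push_cast
  linear_combination (-(z.im:ℝ)^2) * this

theorem unit_pow (hp : p.Prime) (h4 : p % 4 = 3) {f : Pell.Solution₁ (p:ℤ)} (hf : Pell.IsFundamental f) 
    {z : ℤ√(p:ℤ)} (hz : IsUnit z) :
    ∃ j : ℤ, io p z = (io p f) ^ j ∨ io p z = - (io p f) ^ j := by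
  have hn := isUnit_norm hp h4 hz
  rw [Zsqrtd.norm_def] at hn
  let V : Pell.Solution₁ (p:ℤ) →* ℝ := ((io p) : ℤ√(p:ℤ) →* ℝ).comp (unitary (ℤ√(p:ℤ))).subtype
  have hV : ∀ g : Pell.Solution₁ (p:ℤ), V g = io p g := fun g => rfl
  have hVi : ∀ g, V g⁻¹ = (V g)⁻¹ := fun g => by
    apply eq_inv_of_mul_eq_one_left; rw [← map_mul]; simp
  obtain ⟨j, hj⟩ := hf.eq_zpow_or_neg_zpow (Pell.Solution₁.mk z.re z.im (by linarith))
  refine ⟨j, ?_⟩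
  have hzz : io p z = V (Pell.Solution₁.mk z.re z.im (by linarith)) := rfl
  rcases hj with hj | hj
  · left; rw [hzz, hj, map_zpow' V hVi, hV]
  · right; rw [hzz, hj, ← hV, ← map_zpow' V hVi, hV, hV, ← map_neg]; rfl

theorem fund_gt {f : Pell.Solution₁ (p:ℤ)} (hf : Pell.IsFundamental f) : 1 < io p f := by
  rw [io_apply]
  have h1 : (1:ℝ) < (f.x : ℝ) := by exact_mod_cast hf.1
  have h2 : (0:ℝ) < (f.y : ℝ) := by exact_mod_cast hf.2.1
  have : 0 ≤ (f.y : ℝ) * √(p:ℝ) := by positivity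
  change 1 < (f.x : ℝ) + f.y * √(p:ℝ)
  linarith

theorem fund_star (f : Pell.Solution₁ (p:ℤ)) : io p f * io p (star (f : ℤ√(p:ℤ))) = 1 := by
  rw [← map_mul, (Unitary.mem_iff.mp f.2).2, map_one]

noncomputable def Sg (σ : K' ≃ₐ[ℚ] K') : (𝓞 K')ˣ →* (𝓞 K')ˣ := 
  Units.map (RingOfIntegers.mapRingHom σ).toMonoidHom

theorem val_Sg (u : (𝓞 K')ˣ) : val K' (Sg σ u) = (σ ((u : 𝓞 K') : K') : ℝ) := rfl

/-- conjugate bound -/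
theorem star_ineq (h : Dat p K' σ) {a b : ℤ} {f : Pell.Solution₁ (p:ℤ)} (hf : Pell.IsFundamental f)
    (hx : f.x = a ^ 2 - 1) (hy : f.y = a * b) {t n β : ℤ√(p:ℤ)}
    (hh : t ^ 2 - 4 * n = (⟨a ^ 2 - 1, a * b⟩ : ℤ√(p:ℤ)) * Zsqrtd.sqrtd * β ^ 2) :
    io p (star t) ^ 2 ≤ 4 * io p (star n) := by
  have he : (⟨a ^ 2 - 1, a * b⟩ : ℤ√(p:ℤ)) = f := by
    rw [← hx, ← hy]; rfl
  rw [he] at hh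
  have h1 := congrArg (fun z => io p (star z)) hh
  simp only [star_sub, star_mul, star_pow, map_sub, map_mul, map_pow] at h1
  have h2 : star (4 : ℤ√(p:ℤ)) = 4 := star_ofNat 4
  have h3 : io p (star Zsqrtd.sqrtd) = - √(p:ℝ) := by simp [io_star]
  rw [h2, h3, map_ofNat] at h1
  have h4 : 0 < io p (star (f : ℤ√(p:ℤ))) := by
    have := fund_star f
    have := fund_gt hf
    by_contra hc
    push Not at hc
    nlinarith
  have h5 : 0 ≤ io p (star β) ^ 2 * (√(p:ℝ) * io p (star (f : ℤ√(p:ℤ)))) := by positivity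
  linarith

theorem Dat.normU (h : Dat p K' σ) {a b : ℤ} (hab : a ^ 2 - p * b ^ 2 = 2) {f : Pell.Solution₁ (p:ℤ)}
    (hf : Pell.IsFundamental f) (hx : f.x = a ^ 2 - 1) (hy : f.y = a * b) (η : (𝓞 K')ˣ) :
    ∃ j : ℤ, val K' η * val K' (Sg σ η) = (io p f) ^ j := by
  obtain ⟨t, n, β, h1, h2, h3⟩ := h.tnb hab (val_int η)
  obtain ⟨t', n', β', h1', h2', h3'⟩ := h.tnb hab (val_int η⁻¹)
  have e2 : val K' η * val K' (Sg σ η) = io p n := h2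
  have e2' : val K' η⁻¹ * val K' (Sg σ η⁻¹) = io p n' := h2'
  have hnn : n * n' = 1 := by
    apply io_inj h.hp
    rw [map_mul, ← e2, ← e2', mul_mul_mul_comm, ← map_mul, ← map_mul, ← map_mul]; simp
  have hu : IsUnit n := IsUnit.of_mul_eq_one _ hnn
  have hnorm := isUnit_norm h.hp h.h4 hu
  have hpos : 0 < io p n := by
    have h5 := star_ineq h hf hx hy h3
    have h6 := io_mul_star p n
    rw [hnorm] at h6
    push_cast at h6
    have h7 : 0 ≤ io p (star n) := by nlinarith [sq_nonneg (io p (star t))]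
    by_contra hc
    push Not at hc
    nlinarith
  obtain ⟨j, hj | hj⟩ := unit_pow h.hp h.h4 hf hu
  · exact ⟨j, by rw [e2, hj]⟩
  · exfalso
    have := fund_gt hf
    have : 0 < io p f ^ j := zpow_pos (by linarith) j
    linarith

theorem Dat.exists_norm_one (h : Dat p K' σ) [NumberField K'] : ∃ η : (𝓞 K')ˣ, 1 < val K' η ∧ η * Sg σ η = 1 := by
  let i1 : K' →+* ℂ := Complex.ofRealHom.comp (algebraMap K' ℝ)
  let i2 : K' →+* ℂ := i1.comp (σ : K' →+* K')
  let w1 := InfinitePlace.mk i1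
  let w2 := InfinitePlace.mk i2
  have a1 : ∀ x : K', w1 x = |(x:ℝ)| := fun x => by
    rw [InfinitePlace.apply]; exact Complex.norm_real _
  have a2 : ∀ x : K', w2 x = |(σ x:ℝ)| := fun x => by
    rw [InfinitePlace.apply]; exact Complex.norm_real _
  have hne : w2 ≠ w1 := by
    intro hw
    have := congrArg (fun w : InfinitePlace K' => w (1 + ⟨_, h.thetaMem⟩)) hw
    simp only [a1, a2] at this
    rw [map_add, map_one, h.sigma_theta] at this
    push_cast at this
    have hth := h.thpos
    rcases abs_eq_abs.mp this with h1 | h1 <;> linarith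
  obtain ⟨u, hu⟩ := Units.dirichletUnitTheorem.exists_unit K' w1
  have hlt : ∀ w : InfinitePlace K', w ≠ w1 → w u < 1 := fun w hw => by
    have := hu w hw
    by_contra hc
    push Not at hc
    have := Real.log_nonneg hc
    linarith
  have hge : 1 ≤ w1 u := InfinitePlace.one_le_of_lt_one u.ne_zero (fun z hz => hlt z hz)
  have h2 := hlt w2 hne
  rw [a2] at h2
  rw [a1] at hge
  change 1 ≤ |val K' u| at hge
  change |val K' (Sg σ u)| < 1 at h2
  have hSS : ∀ u, Sg σ (Sg σ u) = u := fun u => val_inj K' (by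
    exact congrArg Subtype.val (h.sigsig ((u : 𝓞 K') : K')))
  refine ⟨(u * (Sg σ u)⁻¹) ^ 2, ?_, ?_⟩
  · rw [map_pow, map_mul, val_inv]
    have h0 : 0 < |val K' (Sg σ u)| := abs_pos.mpr (val_ne _)
    rw [← div_eq_mul_inv, ← sq_abs, abs_div]
    have : 1 < |val K' u| / |val K' (Sg σ u)| := by
      rw [one_lt_div h0]; linarith
    exact one_lt_pow₀ this (by norm_num)
  · rw [map_pow, ← mul_pow, map_mul, map_inv, hSS]
    simp

theorem finite_box (hp : p.Prime) (M : ℝ) : {z : ℤ√(p:ℤ) | |io p z| ≤ M ∧ |io p (star z)| ≤ M}.Finite := by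
  obtain ⟨N, hN⟩ := exists_nat_ge M
  have hs : 1 ≤ √(p:ℝ) := by
    rw [Real.one_le_sqrt]; exact_mod_cast hp.one_lt.le
  apply Set.Finite.of_injOn (f := fun z : ℤ√(p:ℤ) => (z.re, z.im)) (t := (Set.Icc (-(N:ℤ)) N) ×ˢ (Set.Icc (-(N:ℤ)) N))
  · intro z hz
    obtain ⟨h1, h2⟩ := hz
    rw [io_star] at h2
    rw [io_apply] at h1
    rw [abs_le] at h1 h2
    have h3 : |(z.re:ℝ)| ≤ N := by rw [abs_le]; constructor <;> linarith
    have h5 : |(z.im:ℝ) * √(p:ℝ)| ≤ N := by rw [abs_le]; constructor <;> linarith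
    have h6 : |(z.im:ℝ)| ≤ N := by
      rw [abs_mul, abs_of_nonneg (by linarith : 0 ≤ √(p:ℝ))] at h5
      nlinarith [abs_nonneg (z.im:ℝ)]
    have h3' : |z.re| ≤ (N:ℤ) := by exact_mod_cast h3
    have h6' : |z.im| ≤ (N:ℤ) := by exact_mod_cast h6
    exact ⟨abs_le.mp h3', abs_le.mp h6'⟩
  · intro z _ w _ hzw
    simp only [Prod.mk.injEq] at hzw
    exact Zsqrtd.ext hzw.1 hzw.2
  · exact (Set.finite_Icc _ _).prod (Set.finite_Icc _ _)

theorem Dat.exists_min (h : Dat p K' σ) [NumberField K'] {a b : ℤ} (hab : a ^ 2 - p * b ^ 2 = 2) {f : Pell.Solution₁ (p:ℤ)}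
    (hf : Pell.IsFundamental f) (hx : f.x = a ^ 2 - 1) (hy : f.y = a * b) :
    ∃ η₀ : (𝓞 K')ˣ, 1 < val K' η₀ ∧ η₀ * Sg σ η₀ = 1 ∧ ∀ η, 1 < val K' η → η * Sg σ η = 1 → val K' η₀ ≤ val K' η := by
  obtain ⟨η₁, h1, h2⟩ := h.exists_norm_one
  set X : Set (𝓞 K')ˣ := {η | 1 < val K' η ∧ η * Sg σ η = 1 ∧ val K' η ≤ val K' η₁} with hX
  have hfin : X.Finite := by
    apply Set.Finite.of_injOn (f := fun η => val K' η + (val K' η)⁻¹)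
      (t := io p '' {z : ℤ√(p:ℤ) | |io p z| ≤ val K' η₁ + 2 ∧ |io p (star z)| ≤ val K' η₁ + 2})
    · rintro η ⟨hη1, hη2, hη3⟩
      obtain ⟨t, n, β, e1, e2, e3⟩ := h.tnb hab (val_int η)
      have e2' : val K' η * val K' (Sg σ η) = io p n := e2
      have e1' : val K' η + val K' (Sg σ η) = io p t := e1
      have hS : val K' (Sg σ η) = (val K' η)⁻¹ := by
        rw [← val_inv]; congr 1; exact eq_inv_of_mul_eq_one_right hη2
      have hn : n = 1 := by
        apply io_inj h.hp
        rw [← e2', ← map_mul, hη2, map_one, map_one]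
      have h5 := star_ineq h hf hx hy e3
      rw [hn, star_one, map_one] at h5
      have h6 : (val K' η)⁻¹ < 1 := inv_lt_one_of_one_lt₀ hη1
      have h7 : 0 < (val K' η)⁻¹ := by positivity
      refine ⟨t, ⟨?_, ?_⟩, ?_⟩
      · rw [← e1', hS, abs_le]; constructor <;> linarith
      · rw [abs_le]; constructor <;> nlinarith
      · rw [← e1', hS]
    · rintro x ⟨hx1, -, -⟩ y ⟨hy1, -, -⟩ hxy
      simp only at hxy
      apply val_inj
      have hx0 : val K' x ≠ 0 := val_ne x
      have hy0 : val K' y ≠ 0 := val_ne y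
      have : (val K' x - val K' y) * (val K' x * val K' y - 1) = 0 := by
        field_simp at hxy
        linear_combination hxy
      rcases mul_eq_zero.mp this with h3 | h3
      · linarith
      · nlinarith
    · exact (finite_box h.hp _).image _
  obtain ⟨η₀, ⟨m1, m2, m3⟩, m4⟩ := Set.exists_min_image X (val K') hfin ⟨η₁, h1, h2, le_refl _⟩
  refine ⟨η₀, m1, m2, fun η g1 g2 => ?_⟩
  by_cases hc : val K' η ≤ val K' η₁
  · exact m4 η ⟨g1, g2, hc⟩
  · linarith

theorem Dat.exists_root (h : Dat p K' σ) {a b : ℤ} (hab : a ^ 2 - p * b ^ 2 = 2) {f : Pell.Solution₁ (p:ℤ)}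
    (hf : Pell.IsFundamental f) (hx : f.x = a ^ 2 - 1) (hy : f.y = a * b) {η : (𝓞 K')ˣ} (h1 : 1 < val K' η)
    (h2 : η * Sg σ η = 1) : ∃ (u : (𝓞 K')ˣ) (j : ℤ), val K' u ^ 2 = val K' η * io p f ^ j := by
  have he : (⟨a ^ 2 - 1, a * b⟩ : ℤ√(p:ℤ)) = f := by rw [← hx, ← hy]; rfl
  have hmem : ∀ z, io p z ∈ K' := fun z => h.kle (io_mem p z)
  have hfu : IsUnit (f : ℤ√(p:ℤ)) := IsUnit.of_mul_eq_one _ (Unitary.mem_iff.mp f.2).2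
  -- it suffices to find a square root in the field
  suffices hs : ∃ U ∈ K', ∃ w : ℤ√(p:ℤ), IsUnit w ∧ U ^ 2 = val K' η * io p w by
    obtain ⟨U, hU, w, hw, hUw⟩ := hs
    obtain ⟨w', hww⟩ := hw.exists_right_inv
    have hww' : io p w * io p w' = 1 := by rw [← map_mul, hww, map_one]
    have hη0 := val_ne η
    have hU0 : U ≠ 0 := by
      intro h0
      rw [h0] at hUw
      have : io p w ≠ 0 := left_ne_zero_of_mul_eq_one hww'
      have := mul_ne_zero hη0 this
      exact this (by rw [← hUw]; norm_num)
    obtain ⟨u, hu⟩ := mk_unit hU (IsIntegral.of_pow (n := 2) (by norm_num) (by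
        rw [hUw]; exact (val_int η).mul (isInt_io p w))) (y := U⁻¹)
        (IsIntegral.of_pow (n := 2) (by norm_num) (by
        have : U⁻¹ ^ 2 = val K' η⁻¹ * io p w' := by
          rw [inv_pow, hUw, mul_inv, val_inv, eq_inv_of_mul_eq_one_right hww']
        rw [this]
        exact (val_int _).mul (isInt_io p _))) (mul_inv_cancel₀ hU0)
    obtain ⟨j, hj | hj⟩ := unit_pow h.hp h.h4 hf hw
    · exact ⟨u, j, by rw [hu, hUw, hj]⟩
    · exfalso
      rw [hj] at hUw
      have := fund_gt hf
      have : 0 < io p f ^ j := zpow_pos (by linarith) j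
      have : 0 < U ^ 2 := by positivity
      nlinarith
  obtain ⟨t, n, β, e1, e2, e3⟩ := h.tnb hab (val_int η)
  have e2' : val K' η * val K' (Sg σ η) = io p n := e2
  have e1' : val K' η + val K' (Sg σ η) = io p t := e1
  have hS : val K' (Sg σ η) = (val K' η)⁻¹ := by
    rw [← val_inv]; congr 1; exact eq_inv_of_mul_eq_one_right h2
  have hn : n = 1 := by
    apply io_inj h.hp
    rw [← e2', ← map_mul, h2, map_one, map_one]
  rw [hn, mul_one] at e3
  have hη0 : 0 < val K' η := by linarith
  have ht2 : io p (t + 2) = (1 + val K' η) ^ 2 / val K' η := by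
    rw [map_add, ← e1', hS, map_ofNat]; field_simp; ring
  have ht0 : t + 2 ≠ 0 := by
    intro h0
    rw [h0, map_zero] at ht2
    have : 0 < (1 + val K' η) ^ 2 / val K' η := by positivity
    linarith
  haveI := dedekind h.hp h.h4
  obtain ⟨w, D, E, hw, hE, hcase⟩ := mainP h.hp h.hmod hab rfl (he ▸ hfu) e3 ht0
  have hE' : io p E ≠ 0 := by rwa [Ne, map_eq_zero_iff _ (io_inj h.hp)]
  have hD' : io p D ≠ 0 := by
    intro h0
    rw [map_eq_zero_iff _ (io_inj h.hp)] at h0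
    subst h0
    haveI : IsDomain (ℤ√(p:ℤ)) := Function.Injective.isDomain (io p) (io_inj h.hp)
    have : (t + 2) * E ^ 2 = 0 := by rcases hcase with hc | hc <;> simpa using hc
    rcases mul_eq_zero.mp this with h3 | h3
    · exact ht0 h3
    · exact hE (pow_eq_zero_iff (by norm_num) |>.mp h3)
  rcases hcase with hc | hc
  · have hc' := congrArg (io p) hc
    rw [map_mul, map_mul, ht2, map_pow, map_pow] at hc'
    refine ⟨(1 + val K' η) * io p E / io p D, ?_, w, hw, ?_⟩
    · exact div_mem (mul_mem (add_mem (one_mem _) (val_mem η)) (hmem E)) (hmem D)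
    · field_simp at hc' ⊢
      linear_combination hc'
  · have hc' := congrArg (io p) hc
    rw [map_mul, map_mul, map_mul, ht2, map_pow, map_pow, io_sqrtd] at hc'
    have hπ : io p ⟨a, b⟩ ^ 2 = 2 * io p f := by
      rw [← he, ← map_ofNat (io p) 2, ← map_mul, ← map_pow]
      congr 1
      rw [Zsqrtd.ext_iff]; simp [pow_two]; constructor <;> nlinarith
    have hth := thsq p
    have hthp := h.thpos
    refine ⟨(1 + val K' η) * io p E * io p ⟨a, b⟩ / (io p D * √(2 * √(p:ℝ))), ?_, w * f, hw.mul hfu, ?_⟩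
    · exact div_mem (mul_mem (mul_mem (add_mem (one_mem _) (val_mem η)) (hmem E)) (hmem _))
        (mul_mem (hmem D) h.thetaMem)
    · rw [div_pow, mul_pow, mul_pow, mul_pow, hth, hπ, map_mul]
      have hsp := h.spos
      field_simp at hc' ⊢
      linear_combination (io p f) * hc'

theorem Dat.main (h : Dat p K' σ) [NumberField K'] : 
    ∃ ξ : (𝓞 K')ˣ, (∀ φ : K' →+* ℝ, 0 < φ ((ξ : 𝓞 K') : K')) ∧
      Subgroup.closure ({-1, ξ, Sg σ ξ} : Set (𝓞 K')ˣ) = ⊤ ∧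
      ∃ f : Pell.Solution₁ (p:ℤ), Pell.IsFundamental f ∧ val K' (ξ * Sg σ ξ) = io p f := by
  obtain ⟨f, hf, a, b, hab, hx, hy⟩ := exists_fund h.hp h.hmod
  obtain ⟨η₀, h1, h2, h3⟩ := h.exists_min hab hf hx hy
  obtain ⟨u, j, hu⟩ := h.exists_root hab hf hx hy h1 h2
  obtain ⟨ε, hε⟩ := mk_unit (F := K') (h.kle (io_mem p (f : ℤ√(p:ℤ)))) (isInt_io p _) (isInt_io p _) (fund_star f)
  have hinj := val_inj K'
  obtain ⟨ξ, g1, g2, g3, g4⟩ := group_part (val K') hinj (Sg σ) ε (-1) η₀ u (by rw [val_neg, map_one])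
    (by
      apply hinj
      rw [val_Sg, val_neg, map_one]; simp)
    (by rw [hε]; exact fund_gt hf)
    (by
      apply hinj
      rw [val_Sg]
      have hm : val K' ε ∈ ℚ⟮√(p:ℝ)⟯ := by rw [hε]; exact io_mem p _
      exact congrArg Subtype.val (h.hσk _ hm))
    (fun η => by
      obtain ⟨i, hi⟩ := h.normU hab hf hx hy η
      exact ⟨i, hinj (by rw [map_mul, hi, val_zpow, hε])⟩)
    h1 h2 h3 j (hinj (by rw [map_pow, map_mul, val_zpow, hu, hε]))
  refine ⟨ξ, fun φ => ?_, g4, f, hf, by rw [g3, hε]⟩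
  rcases h.homs φ with hφ | hφ
  · rw [hφ]; exact g1
  · rw [hφ]; exact g2

end TPU

/-- For a prime `p ≡ -1 (mod 16)`, `K' = ℚ(√(2√p)) ⊂ ℝ`, `k = ℚ(√p)`
its quadratic subfield, and `σ` the nontrivial automorphism of `K'` fixing `k`, there is a
totally positive unit `ξ` of `𝓞 K'` such that `(𝓞 K')ˣ` is generated by `-1, ξ, σ ξ` and
`ξ·σ(ξ)` is the fundamental unit of `k`. -/
theorem exists_totally_positive_generating_unit
    (p : ℕ) (hp : p.Prime) (hmod : p % 16 = 15)
    (K' k : IntermediateField ℚ ℝ)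
    (hK' : K' = ℚ⟮Real.sqrt (2 * Real.sqrt p)⟯)
    (hk : k = ℚ⟮Real.sqrt p⟯)
    [NumberField K'] [NumberField k]
    (σ : K' ≃ₐ[ℚ] K')
    (hσ : σ ≠ AlgEquiv.refl)
    (hσk : ∀ x : K', (x : ℝ) ∈ k → σ x = x) :
    ∃ ξ : (𝓞 K')ˣ,
      (∀ φ : K' →+* ℝ, 0 < φ ((ξ : 𝓞 K') : K')) ∧
      Subgroup.closure
        ({-1, ξ, Units.map (RingOfIntegers.mapRingHom σ).toMonoidHom ξ} :
          Set (𝓞 K')ˣ) = ⊤ ∧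
      ∃ ε : (𝓞 k)ˣ,
        ((((ξ * Units.map (RingOfIntegers.mapRingHom σ).toMonoidHom ξ : (𝓞 K')ˣ) :
            𝓞 K') : K') : ℝ) = (((ε : 𝓞 k) : k) : ℝ) ∧
        1 < (((ε : 𝓞 k) : k) : ℝ) ∧
        ∀ u : (𝓞 k)ˣ, ∃ n : ℤ, u = ε ^ n ∨ u = -(ε ^ n) := by
  have h : TPU.Dat p K' σ := ⟨hp, hmod, hK', hσ, by rw [← hk]; exact hσk⟩
  obtain ⟨ξ, h1, h2, f, hf, h3⟩ := h.main
  obtain ⟨ε, hε⟩ := TPU.mk_unit (F := k) (by rw [hk]; exact TPU.io_mem p (f : ℤ√(p:ℤ))) (TPU.isInt_io p _)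
    (TPU.isInt_io p _) (TPU.fund_star f)
  refine ⟨ξ, h1, h2, ε, h3.trans hε.symm, ?_, fun u => ?_⟩
  · rw [← TPU.val_apply, hε]; exact TPU.fund_gt hf
  · have hkm : ∀ u : (𝓞 k)ˣ, TPU.val k u ∈ ℚ⟮Real.sqrt p⟯ := fun u => by
      have := TPU.val_mem u
      rwa [← hk]
    obtain ⟨z, hz⟩ := TPU.int_k hp h.h4 (hkm u) (TPU.val_int u)
    obtain ⟨z', hz'⟩ := TPU.int_k hp h.h4 (hkm u⁻¹) (TPU.val_int u⁻¹)
    have hzu : IsUnit z := by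
      apply IsUnit.of_mul_eq_one z'
      apply TPU.io_inj hp
      rw [map_mul, ← hz, ← hz', ← map_mul, mul_inv_cancel, map_one, map_one]
    obtain ⟨j, hj | hj⟩ := TPU.unit_pow hp h.h4 hf hzu
    · exact ⟨j, Or.inl (TPU.val_inj k (by rw [hz, hj, TPU.val_zpow, hε]))⟩
    · exact ⟨j, Or.inr (TPU.val_inj k (by rw [hz, hj, TPU.val_neg, TPU.val_zpow, hε]))⟩
end

section
/- Let p ≡ −1 (mod 8) be a prime and let h(−2p) denote the class number of the imaginary quadratic field ℚ(√(−2p)). Then 4 ∥ h(−2p) (i.e., 4 ∣ h(−2p) and 8 ∤ h(−2p)) if and only if p ≡ 7 (mod 16). -/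
open Polynomial NumberField

theorem hz_group {G : Type*} [CommGroup G] [Finite G] (t i : G) (f : G → ℤ)
    (ht : t ≠ 1) (h2 : ∀ g : G, g ^ 2 = 1 → g = 1 ∨ g = t) (ht2 : t ^ 2 = 1)
    (hi : i ^ 2 = t) (hf : ∀ g h, f (g * h) = f g * f h) (hf1 : ∀ g, f g = 1 ∨ f g = -1)
    (hg : ∃ g, f g = -1) :
    4 ∣ Nat.card G ∧ (8 ∣ Nat.card G ↔ f i = 1) := by
  have hi4 : i ^ 4 = 1 := by rw [show 4 = 2 * 2 from rfl, pow_mul, hi, ht2]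
  have h4 : 4 ∣ Nat.card G := by
    have : orderOf i = 2 ^ (1 + 1) := orderOf_eq_prime_pow (by simpa [hi] using ht) (by simpa using hi4)
    have h := orderOf_dvd_natCard i
    rw [this] at h
    simpa using h
  refine ⟨h4, ?_⟩
  set S : Subgroup G := (powMonoidHom 2 : G →* G).range with hS
  have hker : Nat.card (powMonoidHom 2 : G →* G).ker = 2 := by
    have : ((powMonoidHom 2 : G →* G).ker : Set G) = {1, t} := by
      ext g
      simp only [SetLike.mem_coe, MonoidHom.mem_ker, powMonoidHom_apply, Set.mem_insert_iff,
        Set.mem_singleton_iff]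
      constructor
      · exact h2 g
      · rintro (rfl | rfl)
        · simp
        · exact ht2
    rw [← SetLike.coe_sort_coe, this, Nat.card_coe_set_eq, Set.ncard_pair ht.symm]
  have hSc : Nat.card S * 2 = Nat.card G := by
    have := (powMonoidHom 2 : G →* G).ker.card_mul_index
    rw [Subgroup.index_ker, hker] at this
    rw [hS]; omega
  have hSi : S.index = 2 := by
    have h := S.card_mul_index
    rw [← hSc] at h
    exact Nat.eq_of_mul_eq_mul_left Nat.card_pos h
  have hmem : ∀ g, g ∈ S ↔ ∃ x, x ^ 2 = g := by
    intro g; rw [hS]; simp [MonoidHom.mem_range]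
  have hfS : ∀ g ∈ S, f g = 1 := by
    intro g hg
    obtain ⟨x, rfl⟩ := (hmem g).1 hg
    rw [pow_two, hf]
    rcases hf1 x with h | h <;> simp [h]
  constructor
  · intro h8
    -- the group of squares has order divisible by 4; t is a fourth power
    have : ∃ c : G, c ^ 4 = t := by
      set T : Subgroup G := (powMonoidHom 4 : G →* G).range with hT
      have hk4 : Nat.card (powMonoidHom 4 : G →* G).ker ∣ 4 := by
        have : ((powMonoidHom 4 : G →* G).ker : Set G) = {1, t, i, i * t} := by
          ext g
          simp only [SetLike.mem_coe, MonoidHom.mem_ker, powMonoidHom_apply, Set.mem_insert_iff,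
            Set.mem_singleton_iff]
          constructor
          · intro h
            rcases h2 (g ^ 2) (by rw [← pow_mul]; exact h) with h | h
            · rcases h2 g h with h | h <;> simp [h]
            · rcases h2 (g * i⁻¹) (by rw [mul_pow, inv_pow, hi, h, mul_inv_cancel]) with h | h
              · right; right; left; exact mul_inv_eq_one.1 h
              · right; right; right; rw [mul_comm, ← h]; simp
          · rintro (rfl | rfl | rfl | rfl)
            · simp
            · rw [show 4 = 2 * 2 from rfl, pow_mul, ht2, one_pow]
            · exact hi4
            · rw [mul_pow, hi4, show 4 = 2 * 2 from rfl, pow_mul, ht2, one_pow, one_mul]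
        have hit : i ≠ t := by
          rintro rfl; exact ht (hi ▸ ht2)
        have hi1 : i ≠ 1 := by rintro rfl; apply ht; rw [← hi]; simp
        rw [← SetLike.coe_sort_coe, this, Nat.card_coe_set_eq, Set.ncard_insert_of_notMem,
          Set.ncard_insert_of_notMem, Set.ncard_pair]
        · simpa using ht
        · have : t ≠ i * t := fun h => hi1 (by simpa using h.symm)
          simp [hit.symm, this]
        · have : 1 ≠ i * t := fun h => hit (by
            have := congrArg (· * t) h
            simp only [one_mul, mul_assoc, ← pow_two, ht2, mul_one] at this
            exact this.symm)
          simp [ht.symm, hi1.symm, this]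
      have hTc : 2 ∣ Nat.card T := by
        have := (powMonoidHom 4 : G →* G).ker.card_mul_index
        rw [Subgroup.index_ker, ← hT] at this
        obtain ⟨k, hk⟩ := hk4
        obtain ⟨m, hm⟩ := h8
        refine ⟨m * k, ?_⟩
        have hk0 : 0 < Nat.card (powMonoidHom 4 : G →* G).ker := Nat.card_pos
        apply Nat.eq_of_mul_eq_mul_left hk0
        rw [this, hm]
        calc 8 * m = 2 * m * 4 := by ring
          _ = 2 * m * (Nat.card (powMonoidHom 4 : G →* G).ker * k) := congrArg (2 * m * ·) hk
          _ = _ := by ring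
      have : Fact (Nat.Prime 2) := ⟨Nat.prime_two⟩
      obtain ⟨x, hx⟩ := exists_prime_orderOf_dvd_card' 2 hTc
      have hx2 : (x : G) ^ 2 = 1 := by
        have := pow_orderOf_eq_one x
        rw [hx] at this
        exact_mod_cast congrArg Subtype.val this
      have hx1 : (x : G) ≠ 1 := by
        intro h
        have : x = 1 := Subtype.ext h
        rw [this] at hx; simp at hx
      obtain ⟨c, hc⟩ := x.2
      refine ⟨c, ?_⟩
      rcases h2 _ hx2 with h | h
      · exact absurd h hx1
      · rw [← h, ← hc]; rfl
    obtain ⟨c, hc⟩ := this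
    apply hfS
    rw [hmem]
    rcases h2 (i * (c ^ 2)⁻¹) (by
      rw [mul_pow, inv_pow, ← pow_mul, hi]; norm_num; rw [hc, mul_inv_cancel]) with h | h
    · exact ⟨c, (mul_inv_eq_one.1 h).symm⟩
    · refine ⟨c * c ^ 2, ?_⟩
      rw [mul_inv_eq_iff_eq_mul] at h
      rw [h, ← hc, mul_pow, ← pow_mul]
      norm_num
      rw [mul_comm]
  · intro hfi
    have hiS : i ∈ S := by
      by_contra hiS
      obtain ⟨g, hg⟩ := hg
      have hgS : g ∉ S := fun h => by have := hfS g h; omega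
      have := hfS _ ((Subgroup.mul_mem_iff_of_index_two hSi).2 (iff_of_false hiS hgS))
      rw [hf, hfi, hg] at this
      omega
    obtain ⟨c, hc⟩ := (hmem i).1 hiS
    have : orderOf c = 2 ^ (2 + 1) := orderOf_eq_prime_pow
      (by rw [pow_mul c 2 2 |> fun h => (by simpa using h : c ^ 2 ^ 2 = (c ^ 2) ^ 2), hc, hi]; exact ht)
      (by rw [show 2 ^ (2 + 1) = 2 * 4 from rfl, pow_mul, hc, hi4])
    have h := orderOf_dvd_natCard c
    rw [this] at h
    simpa using h

theorem hz_thue (p : ℕ) (hp : p.Prime) (hmod : p % 8 = 7) :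
    ∃ u v : ℤ, 0 < u ∧ u ^ 2 = 2 * v ^ 2 + p := by
  have : Fact p.Prime := ⟨hp⟩
  obtain ⟨w, hw⟩ : IsSquare (2 : ZMod p) :=
    (ZMod.exists_sq_eq_two_iff (by omega)).2 (Or.inr hmod)
  set K := Nat.sqrt p with hK
  have hK1 : p < (K + 1) * (K + 1) := Nat.lt_succ_sqrt p
  have hK2 : K * K ≤ p := Nat.sqrt_le p
  have hns : ∀ m : ℕ, m * m ≠ p := by
    intro m h
    have : m ∣ p := ⟨m, h.symm⟩
    rcases (Nat.dvd_prime hp).1 this with rfl | rfl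
    · omega
    · have := hp.two_le; nlinarith
  have hK3 : K * K < p := lt_of_le_of_ne hK2 (hns K)
  obtain ⟨x, y, hxy, hxe⟩ := Fintype.exists_ne_map_eq_of_card_lt
    (fun z : Fin (K + 1) × Fin (K + 1) => ((z.1 : ℕ) : ZMod p) - w * ((z.2 : ℕ) : ZMod p))
    (by simpa [ZMod.card] using hK1)
  obtain ⟨⟨x1, hx1⟩, ⟨x2, hx2⟩⟩ := x
  obtain ⟨⟨y1, hy1⟩, ⟨y2, hy2⟩⟩ := y
  simp only [ne_eq, Prod.mk.injEq, Fin.mk.injEq] at hxy hxe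
  set A : ℤ := (x1 : ℤ) - y1 with hA
  set B : ℤ := (x2 : ℤ) - y2 with hB
  have hdvd : (p : ℤ) ∣ A ^ 2 - 2 * B ^ 2 := by
    rw [← ZMod.intCast_zmod_eq_zero_iff_dvd]
    have h1 : ((A : ℤ) : ZMod p) = w * ((B : ℤ) : ZMod p) := by
      rw [hA, hB]; push_cast; linear_combination hxe
    push_cast
    rw [h1, hw]; ring
  have hAb : A ^ 2 < p := by
    have h1 : |A| ≤ K := by rw [abs_le]; constructor <;> omega
    have h2 : A ^ 2 ≤ (K : ℤ) ^ 2 := by rw [← sq_abs]; gcongr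
    have : (K : ℤ) ^ 2 < p := by exact_mod_cast (by rw [pow_two]; exact hK3 : K ^ 2 < p)
    omega
  have hBb : B ^ 2 < p := by
    have h1 : |B| ≤ K := by rw [abs_le]; constructor <;> omega
    have h2 : B ^ 2 ≤ (K : ℤ) ^ 2 := by rw [← sq_abs]; gcongr
    have : (K : ℤ) ^ 2 < p := by exact_mod_cast (by rw [pow_two]; exact hK3 : K ^ 2 < p)
    omega
  have hne : A ^ 2 - 2 * B ^ 2 ≠ 0 := by
    intro h
    have hB0 : B = 0 := by
      by_contra hB0
      have : (A : ℝ) ^ 2 = 2 * (B : ℝ) ^ 2 := by exact_mod_cast (by linarith : A ^ 2 = 2 * B ^ 2)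
      have hBr : (B : ℝ) ≠ 0 := by exact_mod_cast hB0
      apply irrational_sqrt_two
      refine ⟨|(A : ℚ) / B|, ?_⟩
      push_cast
      symm
      rw [Real.sqrt_eq_iff_mul_self_eq (by norm_num) (abs_nonneg _), abs_mul_abs_self]
      field_simp
      linarith
    rw [hB0] at h
    have hA0 : A = 0 := by nlinarith
    omega
  obtain ⟨k, hk⟩ := hdvd
  have hp0 : (0 : ℤ) < p := by exact_mod_cast hp.pos
  have hk1 : k = -1 := by
    have hA2 := sq_nonneg A
    have hB2 := sq_nonneg B
    have h1 : k < 1 := by by_contra h; push Not at h; nlinarith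
    have h2 : -2 < k := by by_contra h; push Not at h; nlinarith
    have h3 : k ≠ 0 := by rintro rfl; apply hne; rw [hk]; ring
    omega
  rw [hk1] at hk
  have key : (A + 2 * B) ^ 2 = 2 * (A + B) ^ 2 + p := by linarith [hk]
  refine ⟨|A + 2 * B|, A + B, ?_, by rw [sq_abs]; exact key⟩
  rw [abs_pos]
  intro h
  rw [h] at key
  nlinarith [sq_nonneg (A + B)]

theorem hz_split (p : ℕ) (hp : p.Prime) (h2 : p ≠ 2) (U V c : ℤ) (hU : 0 ≤ U) (hV : 0 ≤ V)
    (hco : IsCoprime U V) (h : U * V = 2 * p * c ^ 2) :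
    ∃ r s : ℤ, c = r * s ∧ ((U = r ^ 2 ∧ V = 2 * p * s ^ 2) ∨ (V = r ^ 2 ∧ U = 2 * p * s ^ 2) ∨
      (U = 2 * r ^ 2 ∧ V = p * s ^ 2) ∨ (V = 2 * r ^ 2 ∧ U = p * s ^ 2)) := by
  have hpp : Prime (p : ℤ) := Nat.prime_iff_prime_int.1 hp
  have hp0 : (0 : ℤ) < p := by exact_mod_cast hp.pos
  have h2p : IsCoprime (2 : ℤ) p := by
    have := (Nat.coprime_primes Nat.prime_two hp).2 h2.symm
    exact_mod_cast Nat.isCoprime_iff_coprime.2 this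
  -- general square splitting
  have sq : ∀ A B : ℤ, 0 ≤ A → 0 ≤ B → IsCoprime A B → A * B = c ^ 2 →
      ∃ r s : ℤ, c = r * s ∧ A = r ^ 2 ∧ B = s ^ 2 := by
    intro A B hA hB hAB hm
    obtain ⟨r, hr⟩ := Int.sq_of_isCoprime hAB hm
    obtain ⟨s, hs⟩ := Int.sq_of_isCoprime hAB.symm (by rw [mul_comm]; exact hm)
    have hr' : A = r ^ 2 := by
      rcases hr with h | h
      · exact h
      · nlinarith [sq_nonneg r]
    have hs' : B = s ^ 2 := by
      rcases hs with h | h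
      · exact h
      · nlinarith [sq_nonneg s]
    have : c ^ 2 = (r * s) ^ 2 := by rw [← hm, hr', hs']; ring
    rcases sq_eq_sq_iff_eq_or_eq_neg.1 this with h | h
    · exact ⟨r, s, h, hr', hs'⟩
    · exact ⟨r, -s, by rw [h]; ring, hr', by rw [hs']; ring⟩
  have d2 : (2 : ℤ) ∣ U ∨ (2 : ℤ) ∣ V := Int.prime_two.dvd_or_dvd ⟨p * c ^ 2, by rw [h]; ring⟩
  have dp : (p : ℤ) ∣ U ∨ (p : ℤ) ∣ V := hpp.dvd_or_dvd ⟨2 * c ^ 2, by rw [h]; ring⟩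
  have hp2 : (2 * p : ℤ) ≠ 0 := by positivity
  rcases d2 with d2 | d2 <;> rcases dp with dp | dp
  · obtain ⟨A, rfl⟩ := h2p.mul_dvd d2 dp
    have hA : 0 ≤ A := by by_contra hA; push Not at hA; nlinarith
    obtain ⟨s, r, h1, h3, h4⟩ := sq A V hA hV hco.of_mul_left_right
      (mul_left_cancel₀ hp2 (by linarith))
    exact ⟨r, s, by rw [h1]; ring, Or.inr (Or.inl ⟨h4, by rw [h3]⟩)⟩
  · obtain ⟨A, rfl⟩ := d2
    obtain ⟨B, rfl⟩ := dp
    have hA : 0 ≤ A := by omega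
    have hB : 0 ≤ B := by by_contra hB; push Not at hB; nlinarith
    obtain ⟨r, s, h1, h3, h4⟩ := sq A B hA hB hco.of_mul_left_right.of_mul_right_right
      (mul_left_cancel₀ hp2 (by linarith))
    exact ⟨r, s, h1, Or.inr (Or.inr (Or.inl ⟨by rw [h3], by rw [h4]⟩))⟩
  · obtain ⟨A, rfl⟩ := d2
    obtain ⟨B, rfl⟩ := dp
    have hA : 0 ≤ A := by omega
    have hB : 0 ≤ B := by by_contra hB; push Not at hB; nlinarith
    obtain ⟨r, s, h1, h3, h4⟩ := sq A B hA hB hco.symm.of_mul_left_right.of_mul_right_right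
      (mul_left_cancel₀ hp2 (by linarith))
    exact ⟨r, s, h1, Or.inr (Or.inr (Or.inr ⟨by rw [h3], by rw [h4]⟩))⟩
  · obtain ⟨A, rfl⟩ := h2p.mul_dvd d2 dp
    have hA : 0 ≤ A := by by_contra hA; push Not at hA; nlinarith
    obtain ⟨s, r, h1, h3, h4⟩ := sq A U hA hU hco.symm.of_mul_left_right
      (mul_left_cancel₀ hp2 (by linarith))
    exact ⟨r, s, by rw [h1]; ring, Or.inl ⟨h4, by rw [h3]⟩⟩

/-- Primitive solutions of `N² = a² + 2 p b²`. -/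
theorem hz_arith (p : ℕ) (hp : p.Prime) (h2 : p ≠ 2) (N a b : ℤ) (hN : 0 ≤ N)
    (hco : IsCoprime a b) (h : N ^ 2 = a ^ 2 + 2 * p * b ^ 2) :
    ∃ r s e : ℤ, (e = 1 ∨ e = -1) ∧
      ((a = e * (r ^ 2 - 2 * p * s ^ 2) ∧ b = e * (2 * r * s)) ∨
       (2 * a = e * (r ^ 2 - 2 * p * s ^ 2) ∧ 2 * b = e * (2 * r * s))) := by
  have hp0 : (0 : ℤ) < p := by exact_mod_cast hp.pos
  have hpp : Prime (p : ℤ) := Nat.prime_iff_prime_int.1 hp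
  -- any prime dividing `N` and `a` divides `b`
  have hprime : ∀ q : ℤ, Prime q → q ∣ N → q ∣ a → False := by
    intro q hq hqN hqa
    apply hq.not_isUnit
    apply hco.isUnit_of_dvd' hqa
    obtain ⟨n, rfl⟩ := hqN
    obtain ⟨m, rfl⟩ := hqa
    have h1 : q * (q * (n ^ 2 - m ^ 2)) = (2 * p : ℤ) * b ^ 2 := by linarith
    have h1' : q ∣ 2 * p * b ^ 2 := ⟨_, h1.symm⟩
    rcases hq.dvd_or_dvd h1' with h3 | h3
    · have : ¬ q * q ∣ 2 * (p : ℤ) := by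
        intro h4
        have h5 : IsUnit q := by
          have hsf : Squarefree (2 * p : ℕ) :=
            (Nat.squarefree_mul ((Nat.coprime_primes Nat.prime_two hp).2 h2.symm)).2
              ⟨Nat.prime_two.squarefree, hp.squarefree⟩
          have hsf' : Squarefree ((2 * p : ℕ) : ℤ) := Int.squarefree_natCast.2 hsf
          exact hsf' q (by push_cast; exact h4)
        exact hq.not_isUnit h5
      obtain ⟨k, hk⟩ := h3
      rw [hk, mul_assoc] at h1
      have h6 := mul_left_cancel₀ hq.ne_zero h1
      rcases hq.dvd_or_dvd (⟨_, h6.symm⟩ : q ∣ k * b ^ 2) with h7 | h7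
      · exact absurd (by rw [hk]; exact mul_dvd_mul_left q h7) this
      · exact hq.dvd_of_dvd_pow h7
    · exact hq.dvd_of_dvd_pow h3
  have hNa : Odd N ∧ Odd a := by
    have hpar : Even N ↔ Even a := by
      have : Even (N ^ 2) ↔ Even (a ^ 2) := by
        rw [h, Int.even_add]
        simp
      simpa [Int.even_pow] using this
    by_cases hN2 : Even N
    · exact (hprime 2 Int.prime_two hN2.two_dvd (hpar.1 hN2).two_dvd).elim
    · exact ⟨Int.not_even_iff_odd.1 hN2, Int.not_even_iff_odd.1 (fun h => hN2 (hpar.2 h))⟩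
  obtain ⟨U, hU⟩ : ∃ U, N + a = 2 * U := (hNa.1.add_odd hNa.2).two_dvd
  obtain ⟨V, hV⟩ : ∃ V, N - a = 2 * V := (hNa.1.sub_odd hNa.2).two_dvd
  have hUV : 2 * (U * V) = p * b ^ 2 := by
    have : (2 * U) * (2 * V) = 2 * p * b ^ 2 := by rw [← hU, ← hV]; linarith
    linarith
  have hb : Even b := by
    have : Even (p * b ^ 2 : ℤ) := by rw [← hUV]; simp
    have hpo : ¬ Even (p : ℤ) := by
      have := hp.eq_two_or_odd'.resolve_left h2
      rw [Int.not_even_iff_odd]; exact_mod_cast this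
    rw [Int.even_mul, Int.even_pow] at this
    tauto
  obtain ⟨c, hc⟩ := hb.two_dvd
  have hUVc : U * V = 2 * p * c ^ 2 := by rw [hc] at hUV; linarith
  have habs : |a| ≤ N := by
    apply abs_le_of_sq_le_sq _ hN
    rw [h]; nlinarith [sq_nonneg b]
  have ⟨hl, hr⟩ := abs_le.1 habs
  have hcop : IsCoprime U V := by
    apply isCoprime_of_prime_dvd
    · rintro ⟨rfl, rfl⟩
      have : N = 0 := by omega
      rw [this] at hNa
      simp at hNa
    · intro q hq h1 h2
      apply hprime q hq
      · rw [show N = U + V by omega]; exact dvd_add h1 h2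
      · rw [show a = U - V by omega]; exact dvd_sub h1 h2
  obtain ⟨r, s, hrs, h1 | h1 | h1 | h1⟩ := hz_split p hp h2 U V c (by omega) (by omega) hcop hUVc
  · exact ⟨r, s, 1, Or.inl rfl, Or.inl ⟨by rw [← h1.1, ← h1.2]; omega, by rw [hc, hrs]; ring⟩⟩
  · exact ⟨r, -s, -1, Or.inr rfl, Or.inl ⟨by
      have : a = U - V := by omega
      rw [this, h1.1, h1.2]; ring, by rw [hc, hrs]; ring⟩⟩
  · exact ⟨2 * r, s, 1, Or.inl rfl, Or.inr ⟨by
      have : a = U - V := by omega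
      rw [this, h1.1, h1.2]; ring, by rw [hc, hrs]; ring⟩⟩
  · exact ⟨2 * r, -s, -1, Or.inr rfl, Or.inr ⟨by
      have : a = U - V := by omega
      rw [this, h1.1, h1.2]; ring, by rw [hc, hrs]; ring⟩⟩

/-- Legendre symbol of the prime-to-`p` part. -/
noncomputable def hzChi (p : ℕ) [Fact p.Prime] (n : ℕ) : ℤ :=
  legendreSym p ((ordCompl[p] n : ℕ) : ℤ)

theorem hzChi_mul (p : ℕ) [Fact p.Prime] (m n : ℕ) : hzChi p (m * n) = hzChi p m * hzChi p n := by
  unfold hzChi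
  rw [Nat.ordCompl_mul]; push_cast; rw [legendreSym.mul]

theorem hzChi_of_not_dvd (p : ℕ) [Fact p.Prime] (n : ℕ) (h : ¬ p ∣ n) :
    hzChi p n = legendreSym p n := by
  unfold hzChi
  rw [Nat.factorization_eq_zero_of_not_dvd h, pow_zero, Nat.div_one]

theorem hzChi_self (p : ℕ) [hp : Fact p.Prime] : hzChi p p = 1 := by
  unfold hzChi
  rw [Nat.Prime.factorization_self hp.out, pow_one, Nat.div_self hp.out.pos]
  simp

theorem hzChi_pm (p : ℕ) [hp : Fact p.Prime] (n : ℕ) (hn : n ≠ 0) :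
    hzChi p n = 1 ∨ hzChi p n = -1 := by
  unfold hzChi
  apply legendreSym.eq_one_or_neg_one
  rw [Int.cast_natCast, Ne, ZMod.natCast_eq_zero_iff]
  exact Nat.not_dvd_ordCompl hp.out hn

theorem hzChi_norm (p : ℕ) [hp : Fact p.Prime] (hmod : p % 8 = 7) :
    ∀ (n : ℕ) (a b : ℤ), a.natAbs + b.natAbs = n → (a ≠ 0 ∨ b ≠ 0) →
      hzChi p (a ^ 2 + 2 * p * b ^ 2).natAbs = 1 := by
  have hpp : Prime (p : ℤ) := Nat.prime_iff_prime_int.1 hp.out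
  have hp2 := hp.out.two_le
  have hnn : ∀ a b : ℤ, ((a ^ 2 + 2 * p * b ^ 2).natAbs : ℤ) = a ^ 2 + 2 * p * b ^ 2 := by
    intro a b; exact Int.natAbs_of_nonneg (by positivity)
  intro n
  induction n using Nat.strong_induction_on with
  | _ n ih =>
  intro a b hab h0
  by_cases ha : (p : ℤ) ∣ a
  · obtain ⟨a', rfl⟩ := ha
    have e1 : ((p * a') ^ 2 + 2 * p * b ^ 2 : ℤ).natAbs = p * (p * a' ^ 2 + 2 * b ^ 2 : ℤ).natAbs := by
      rw [show ((p * a') ^ 2 + 2 * p * b ^ 2 : ℤ) = p * (p * a' ^ 2 + 2 * b ^ 2) by ring,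
        Int.natAbs_mul, Int.natAbs_natCast]
    rw [e1, hzChi_mul, hzChi_self, one_mul]
    by_cases hb : (p : ℤ) ∣ b
    · obtain ⟨b', rfl⟩ := hb
      have e2 : (p * a' ^ 2 + 2 * (p * b') ^ 2 : ℤ).natAbs = p * (a' ^ 2 + 2 * p * b' ^ 2 : ℤ).natAbs := by
        rw [show (p * a' ^ 2 + 2 * (p * b') ^ 2 : ℤ) = p * (a' ^ 2 + 2 * p * b' ^ 2) by ring,
          Int.natAbs_mul, Int.natAbs_natCast]
      rw [e2, hzChi_mul, hzChi_self, one_mul]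
      refine ih _ ?_ a' b' rfl ?_
      · rw [← hab, Int.natAbs_mul, Int.natAbs_mul, Int.natAbs_natCast, ← mul_add]
        have : 0 < a'.natAbs + b'.natAbs := by
          rcases h0 with h | h
          · have : a' ≠ 0 := right_ne_zero_of_mul h
            omega
          · have : b' ≠ 0 := right_ne_zero_of_mul h
            omega
        nlinarith
      · rcases h0 with h | h
        · exact Or.inl (right_ne_zero_of_mul h)
        · exact Or.inr (right_ne_zero_of_mul h)
    · have hb0 : ((b : ℤ) : ZMod p) ≠ 0 := by
        rwa [Ne, ZMod.intCast_zmod_eq_zero_iff_dvd]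
      have hc : ((p * a' ^ 2 + 2 * b ^ 2 : ℤ).natAbs : ℤ) = p * a' ^ 2 + 2 * b ^ 2 :=
        Int.natAbs_of_nonneg (by positivity)
      rw [hzChi_of_not_dvd, hc]
      · rw [legendreSym.mod, show (p * a' ^ 2 + 2 * b ^ 2 : ℤ) = 2 * b ^ 2 + p * a' ^ 2 by ring,
          Int.add_mul_emod_self_left, ← legendreSym.mod, legendreSym.mul,
          legendreSym.sq_one' p hb0, mul_one, legendreSym.eq_one_iff]
        · have := (ZMod.exists_sq_eq_two_iff (p := p) (by omega)).2 (Or.inr hmod)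
          exact_mod_cast this
        · have : ¬ (p : ℤ) ∣ 2 := by
            intro h; have := Int.le_of_dvd (by norm_num) h; omega
          rwa [Ne, ZMod.intCast_zmod_eq_zero_iff_dvd]
      · rw [← Int.natCast_dvd_natCast, hc]
        intro h
        have h3 : (p : ℤ) ∣ 2 * b ^ 2 := (dvd_add_right (Dvd.intro _ rfl)).1 h
        rcases hpp.dvd_or_dvd h3 with h | h
        · have := Int.le_of_dvd (by norm_num) h; omega
        · exact hb (hpp.dvd_of_dvd_pow h)
  · have ha0 : ((a : ℤ) : ZMod p) ≠ 0 := by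
      rwa [Ne, ZMod.intCast_zmod_eq_zero_iff_dvd]
    rw [hzChi_of_not_dvd, hnn]
    · rw [legendreSym.mod, show (a ^ 2 + 2 * p * b ^ 2 : ℤ) = a ^ 2 + p * (2 * b ^ 2) by ring,
          Int.add_mul_emod_self_left, ← legendreSym.mod, 
          legendreSym.sq_one' p ha0]
    · rw [← Int.natCast_dvd_natCast, hnn]
      intro h
      exact ha (hpp.dvd_of_dvd_pow ((dvd_add_left ⟨2 * b ^ 2, by ring⟩).1 h))

theorem hz_chi8' (n : ℕ) : ZMod.χ₈' n = ZMod.χ₈' (n % 8 : ℕ) := by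
  rw [← ZMod.natCast_mod n 8]

/-- The value of the character at `u`, where `u² = 2 v² + p`. -/
theorem hzChi_u (p : ℕ) [hp : Fact p.Prime] (hmod : p % 8 = 7) (u : ℕ) (v : ℤ)
    (h : (u : ℤ) ^ 2 = 2 * v ^ 2 + p) : hzChi p u = 1 ↔ ¬ p % 16 = 7 := by
  have hpp : Prime (p : ℤ) := Nat.prime_iff_prime_int.1 hp.out
  have hp0 : (0 : ℤ) < p := by exact_mod_cast hp.out.pos
  have hpu : ¬ p ∣ u := by
    intro hd
    have hd' : (p : ℤ) ∣ u := by exact_mod_cast hd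
    obtain ⟨k, hk⟩ := hd'
    have h1 : (p : ℤ) ∣ 2 * v ^ 2 := ⟨p * k ^ 2 - 1, by rw [hk] at h; linarith⟩
    have h2 : (p : ℤ) ∣ v := by
      rcases hpp.dvd_or_dvd h1 with h | h
      · have := Int.le_of_dvd (by norm_num) h; omega
      · exact hpp.dvd_of_dvd_pow h
    obtain ⟨l, hl⟩ := h2
    rw [hk, hl] at h
    have h3 : (p : ℤ) * (p * (k ^ 2 - 2 * l ^ 2)) = p * 1 := by linarith
    have h4 := mul_left_cancel₀ hp0.ne' h3
    have := Int.le_of_dvd one_pos (Dvd.intro _ h4)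
    omega
  have hodd : Odd u := by
    rw [← Nat.not_even_iff_odd]
    intro he
    have h1 : Even ((u : ℤ) ^ 2) := by
      have : Even (u : ℤ) := by exact_mod_cast he
      exact this.pow_of_ne_zero two_ne_zero
    have h2 := h1.two_dvd
    have h3 : (p : ℤ) % 8 = 7 := by omega
    omega
  have hpodd : Odd p := by rw [Nat.odd_iff]; omega
  have hcop : Int.gcd (v : ℤ) u = 1 := by
    by_contra hg
    obtain ⟨q, hq, hd⟩ := Nat.exists_prime_and_dvd hg
    have hd' : (q : ℤ) ∣ (Int.gcd v u : ℤ) := by exact_mod_cast hd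
    have hqv : (q : ℤ) ∣ v := hd'.trans (Int.gcd_dvd_left ..)
    have hqu : (q : ℤ) ∣ u := hd'.trans (Int.gcd_dvd_right ..)
    have hqp : (q : ℤ) ∣ p := by
      rw [show (p : ℤ) = u ^ 2 - 2 * v ^ 2 by linarith]
      exact dvd_sub (dvd_pow hqu two_ne_zero) (Dvd.dvd.mul_left (dvd_pow hqv two_ne_zero) _)
    have hqp' : q ∣ p := by exact_mod_cast hqp
    rw [(Nat.prime_dvd_prime_iff_eq hq hp.out).1 hqp'] at hqu
    exact hpu (by exact_mod_cast hqu)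
  have hmain : hzChi p u = ZMod.χ₈ (u : ZMod 8) := by
    rw [hzChi_of_not_dvd p u hpu, jacobiSym.legendreSym.to_jacobiSym]
    have h1 : jacobiSym (p : ℤ) u = jacobiSym (-2) u := by
      have : jacobiSym (p : ℤ) u = jacobiSym (-2 * v ^ 2) u := by
        rw [jacobiSym.mod_left (p : ℤ), jacobiSym.mod_left (-2 * v ^ 2)]
        congr 1
        rw [show (p : ℤ) = -2 * v ^ 2 + u * u by linarith, Int.add_mul_emod_self_left]
      rw [this, jacobiSym.mul_left, jacobiSym.sq_one' hcop, mul_one]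
    rw [jacobiSym.at_neg_two hodd] at h1
    have hu8 : u % 8 = 1 ∨ u % 8 = 5 ∨ u % 8 = 3 ∨ u % 8 = 7 := by
      rw [Nat.odd_iff] at hodd; omega
    rw [ZMod.χ₈_nat_mod_eight]
    rw [hz_chi8'] at h1
    rcases hu8 with h8 | h8 | h8 | h8
    · rw [jacobiSym.quadratic_reciprocity_one_mod_four (by omega) hpodd, h1, h8]; rfl
    · rw [jacobiSym.quadratic_reciprocity_one_mod_four (by omega) hpodd, h1, h8]; rfl
    · rw [jacobiSym.quadratic_reciprocity_three_mod_four (by omega) (by omega), h1, h8]; rfl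
    · rw [jacobiSym.quadratic_reciprocity_three_mod_four (by omega) (by omega), h1, h8]; rfl
  have hvodd : Odd v := by
    rw [← Int.not_even_iff_odd]
    rintro ⟨w, rfl⟩
    obtain ⟨m, hm⟩ := hodd
    have h1 : (u : ℤ) ^ 2 = 4 * (m * (m + 1)) + 1 := by rw [hm]; push_cast; ring
    have h2 : 2 * (w + w) ^ 2 = 8 * w ^ 2 := by ring
    obtain ⟨l, hl⟩ := (Int.even_mul_succ_self (m : ℤ)).two_dvd
    rw [h1, h2, hl] at h
    omega
  obtain ⟨w, hw⟩ := hvodd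
  have hv2 : ∃ l, 2 * v ^ 2 = 16 * l + 2 := by
    obtain ⟨l, hl⟩ := (Int.even_mul_succ_self w).two_dvd
    exact ⟨l, by rw [hw]; linarith⟩
  obtain ⟨l, hl⟩ := hv2
  rw [hl] at h
  rw [hmain, ZMod.χ₈_nat_mod_eight]
  have hu8 : u % 8 = 1 ∨ u % 8 = 5 ∨ u % 8 = 3 ∨ u % 8 = 7 := by
    rw [Nat.odd_iff] at hodd; omega
  have hmm : ∀ c : ℤ, (u : ℤ) % 8 = c → ∃ k, (u : ℤ) ^ 2 = 16 * k + c ^ 2 := by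
    intro c hc
    have : (u : ℤ) = 8 * (u / 8) + c := by omega
    exact ⟨4 * (u / 8) ^ 2 + (u / 8) * c, by
      calc (u : ℤ) ^ 2 = (8 * (u / 8) + c) ^ 2 := by rw [← this]
        _ = _ := by ring⟩
  rcases hu8 with h8 | h8 | h8 | h8 <;>
    obtain ⟨k, hk⟩ := hmm ((u % 8 : ℕ) : ℤ) (by push_cast; rfl) <;>
    rw [hk, h8] at h <;> rw [h8]
  · exact iff_of_true rfl (by push_cast at h; omega)
  · exact iff_of_false (by decide) (by push_cast at h; omega)
  · exact iff_of_false (by decide) (by push_cast at h; omega)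
  · exact iff_of_true rfl (by push_cast at h; omega)

theorem hz_dirichlet (p : ℕ) [hp : Fact p.Prime] (hmod : p % 8 = 7) :
    ∃ q : ℕ, q.Prime ∧ hzChi p q = -1 ∧ ∃ x : ℤ, (q : ℤ) ∣ x ^ 2 + 2 * p := by
  have hc : Nat.Coprime 8 p := by
    have : Nat.Coprime p 2 := (Nat.coprime_primes hp.out Nat.prime_two).2 (by omega)
    exact (Nat.Coprime.pow_right 3 this).symm
  obtain ⟨k, hk8, hkp⟩ := Nat.chineseRemainder hc 5 (p - 1)
  have hk8' : k % 8 = 5 := hk8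
  have hkp' : k % p = p - 1 := by
    have : k % p = (p - 1) % p := hkp
    rw [this, Nat.mod_eq_of_lt]; omega
  have hcop : k.Coprime (8 * p) := by
    apply Nat.Coprime.mul_right
    · have : Nat.Coprime k 2 := by
        rw [Nat.coprime_two_right, Nat.odd_iff]; omega
      exact Nat.Coprime.pow_right 3 this
    · rw [Nat.coprime_comm, hp.out.coprime_iff_not_dvd]
      intro h
      have := Nat.mod_eq_zero_of_dvd h
      omega
  obtain ⟨q, hq1, hq, hqm⟩ := Nat.forall_exists_prime_gt_and_modEq p (by omega : 8 * p ≠ 0) hcop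
  have hq8 : q % 8 = 5 := by
    have : q % 8 = k % 8 := hqm.of_mul_right p
    omega
  have hqp : q % p = p - 1 := by
    have : q % p = k % p := hqm.of_mul_left 8
    omega
  have : Fact q.Prime := ⟨hq⟩
  have hqpd : ¬ p ∣ q := by
    intro h; have := Nat.mod_eq_zero_of_dvd h; omega
  have hleg : legendreSym p q = -1 := by
    rw [legendreSym.mod]
    have : ((q : ℤ) % p) = (-1) % p := by
      have h3 : (p : ℤ) ∣ (q : ℤ) - (-1) := by
        refine ⟨(q / p : ℕ) + 1, ?_⟩
        have h4 := Nat.div_add_mod q p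
        rw [hqp] at h4
        have h5 : p * (q / p) + p = q + 1 := by omega
        have h6 : ((p * (q / p) + p : ℕ) : ℤ) = ((q + 1 : ℕ) : ℤ) := by rw [h5]
        push_cast at h6 ⊢
        linarith
      exact (Int.emod_eq_emod_iff_emod_sub_eq_zero).2 (Int.emod_eq_zero_of_dvd h3)
    rw [this, ← legendreSym.mod, legendreSym.at_neg_one (by omega)]
    rw [ZMod.χ₄_nat_three_mod_four (by omega)]
  refine ⟨q, hq, by rw [hzChi_of_not_dvd p q hqpd, hleg], ?_⟩
  have h1 : legendreSym q (-2 * p) = 1 := by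
    rw [legendreSym.mul, legendreSym.at_neg_two (by omega),
      ← legendreSym.quadratic_reciprocity_one_mod_four (by omega) (by omega), hleg, hz_chi8', hq8]
    rfl
  have h0 : ((-2 * p : ℤ) : ZMod q) ≠ 0 := by
    intro h
    rw [(legendreSym.eq_zero_iff q _).2 h] at h1
    omega
  obtain ⟨w, hw⟩ := (legendreSym.eq_one_iff q h0).1 h1
  refine ⟨(w.val : ℤ), ?_⟩
  rw [← ZMod.intCast_zmod_eq_zero_iff_dvd]
  push_cast at hw ⊢
  rw [ZMod.natCast_zmod_val, pow_two, ← hw]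
  ring

/-- The properties of `ℤ[√(-2p)]` that are used. -/
structure HzRing (R : Type*) [CommRing R] [IsDedekindDomain R] [Module.Free ℤ R]
    (p : ℕ) (θ : R) : Prop where
  sq : θ * θ = -(2 * p)
  rep : ∀ x : R, ∃ a b : ℤ, x = a + b * θ
  norm : ∀ a b : ℤ, Ideal.absNorm (Ideal.span {(a + b * θ : R)}) = (a ^ 2 + 2 * p * b ^ 2).natAbs

section
set_option linter.unusedSectionVars false
variable {R : Type*} [CommRing R] [IsDedekindDomain R]

/-- The class of a nonzero ideal. -/
noncomputable def hzCl (I : Ideal R) (hI : I ≠ ⊥) : ClassGroup R :=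
  ClassGroup.mk0 ⟨I, mem_nonZeroDivisors_of_ne_zero hI⟩

theorem hzCl_mul (I J : Ideal R) (hI : I ≠ ⊥) (hJ : J ≠ ⊥) (hIJ : I * J ≠ ⊥) :
    hzCl (I * J) hIJ = hzCl I hI * hzCl J hJ := by
  unfold hzCl
  rw [← map_mul]
  rfl

theorem hzCl_eq_one (I : Ideal R) (hI : I ≠ ⊥) : hzCl I hI = 1 ↔ I.IsPrincipal :=
  ClassGroup.mk0_eq_one_iff _

theorem hzCl_mul_eq_one (I J : Ideal R) (hI : I ≠ ⊥) (hJ : J ≠ ⊥) (x : R)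
    (h : I * J = Ideal.span {x}) : hzCl I hI * hzCl J hJ = 1 := by
  have hIJ : I * J ≠ ⊥ := mul_ne_zero hI hJ
  rw [← hzCl_mul I J hI hJ hIJ, hzCl_eq_one, h]
  exact ⟨x, rfl⟩

theorem hz_sq_inj (I J : Ideal R) (h : I * I = J * J) : I = J := by
  rw [← pow_two, ← pow_two] at h
  exact dvd_antisymm ((UniqueFactorizationMonoid.pow_dvd_pow_iff_dvd two_ne_zero).1 h.dvd)
    ((UniqueFactorizationMonoid.pow_dvd_pow_iff_dvd two_ne_zero).1 h.symm.dvd)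

variable [Module.Free ℤ R] [Module.Finite ℤ R] {p : ℕ} {θ : R}

namespace HzRing

theorem eq_zero (h : HzRing R p θ) (hp : 0 < p) (a b : ℤ) (h0 : (a + b * θ : R) = 0) :
    a = 0 ∧ b = 0 := by
  have h1 := h.norm a b
  rw [h0] at h1
  simp only [Ideal.span_singleton_eq_bot.2, Ideal.absNorm_bot] at h1
  have h2 : a ^ 2 + 2 * p * b ^ 2 = 0 := Int.natAbs_eq_zero.1 h1.symm
  have hp' : (0 : ℤ) < p := by exact_mod_cast hp
  have h3 : 0 ≤ 2 * p * b ^ 2 := by positivity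
  have h4 : a ^ 2 = 0 := by nlinarith [sq_nonneg a]
  have h5 : b ^ 2 = 0 := by
    have : (2 * p : ℤ) * b ^ 2 = 0 := by omega
    exact (mul_eq_zero.1 this).resolve_left (by positivity)
  exact ⟨pow_eq_zero_iff two_ne_zero |>.1 h4, pow_eq_zero_iff two_ne_zero |>.1 h5⟩

theorem dvd (h : HzRing R p θ) (hp : 0 < p) (q a b : ℤ) (hd : (q : R) ∣ a + b * θ) :
    q ∣ a ∧ q ∣ b := by
  obtain ⟨z, hz⟩ := hd
  obtain ⟨c, d, rfl⟩ := h.rep z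
  obtain ⟨h1, h2⟩ := h.eq_zero hp (a - q * c) (b - q * d) (by push_cast; linear_combination hz)
  exact ⟨⟨c, by omega⟩, ⟨d, by omega⟩⟩

theorem int_ne_zero (h : HzRing R p θ) (hp : 0 < p) (q : ℤ) (hq : q ≠ 0) : (q : R) ≠ 0 := by
  intro h0
  exact hq (h.eq_zero hp q 0 (by simp [h0])).1

theorem theta_ne_zero (h : HzRing R p θ) (hp : 0 < p) : θ ≠ 0 := by
  intro h0
  have := (h.eq_zero hp 0 1 (by simp [h0])).2
  omega

theorem norm_int (h : HzRing R p θ) (q : ℤ) : Ideal.absNorm (Ideal.span {(q : R)}) = (q ^ 2).natAbs := by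
  have := h.norm q 0
  simpa using this

theorem P2_sq (h : HzRing R p θ) (hp : p % 2 = 1) :
    Ideal.span {(2 : R), θ} * Ideal.span {(2 : R), θ} = Ideal.span {(2 : R)} := by
  have hs := h.sq
  obtain ⟨k, hk⟩ : ∃ k, p = 2 * k + 1 := ⟨p / 2, by omega⟩
  have hk' : (p : R) = 2 * k + 1 := by rw [hk]; push_cast; ring
  rw [Ideal.span_pair_mul_span_pair]
  apply le_antisymm
  · rw [Ideal.span_le]
    rintro x (rfl | rfl | rfl | rfl) <;> rw [SetLike.mem_coe, Ideal.mem_span_singleton]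
    · exact ⟨2, rfl⟩
    · exact ⟨θ, rfl⟩
    · exact ⟨θ, mul_comm _ _⟩
    · exact ⟨-p, by rw [hs]; ring⟩
  · rw [Ideal.span_singleton_le_iff_mem]
    have e : (2 : R) = (-1) * (θ * θ) + (-k) * (2 * 2) := by rw [hs, hk']; ring
    have m1 : θ * θ ∈ Ideal.span {(2 : R) * 2, 2 * θ, θ * 2, θ * θ} := Ideal.subset_span (by simp)
    have m2 : (2 : R) * 2 ∈ Ideal.span {(2 : R) * 2, 2 * θ, θ * 2, θ * θ} :=
      Ideal.subset_span (by simp)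
    have m3 := Ideal.add_mem _ (Ideal.mul_mem_left _ (-1) m1) (Ideal.mul_mem_left _ (-(k : R)) m2)
    rwa [← e] at m3

theorem P2_Pp (h : HzRing R p θ) (hp : p % 2 = 1) :
    Ideal.span {(2 : R), θ} * Ideal.span {(p : R), θ} = Ideal.span {θ} := by
  have hs := h.sq
  obtain ⟨k, hk⟩ : ∃ k, p = 2 * k + 1 := ⟨p / 2, by omega⟩
  have hk' : (p : R) = 2 * k + 1 := by rw [hk]; push_cast; ring
  rw [Ideal.span_pair_mul_span_pair]
  apply le_antisymm
  · rw [Ideal.span_le]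
    rintro x (rfl | rfl | rfl | rfl) <;> rw [SetLike.mem_coe, Ideal.mem_span_singleton]
    · exact ⟨-θ, by linear_combination hs⟩
    · exact ⟨2, mul_comm _ _⟩
    · exact ⟨p, rfl⟩
    · exact ⟨θ, rfl⟩
  · rw [Ideal.span_singleton_le_iff_mem]
    have e : θ = 1 * (θ * p) + (-k) * (2 * θ) := by rw [hk']; ring
    have m1 : θ * p ∈ Ideal.span {(2 : R) * p, 2 * θ, θ * p, θ * θ} := Ideal.subset_span (by simp)
    have m2 : (2 : R) * θ ∈ Ideal.span {(2 : R) * p, 2 * θ, θ * p, θ * θ} :=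
      Ideal.subset_span (by simp)
    have m3 := Ideal.add_mem _ (Ideal.mul_mem_left _ 1 m1) (Ideal.mul_mem_left _ (-(k : R)) m2)
    rwa [← e] at m3

theorem P_ne_bot (h : HzRing R p θ) (hp : 0 < p) (x : R) : Ideal.span {x, θ} ≠ ⊥ := by
  intro h0
  apply h.theta_ne_zero hp
  rw [← Ideal.mem_bot, ← h0]
  exact Ideal.subset_span (by simp)

theorem P2_norm (h : HzRing R p θ) (hp : p % 2 = 1) :
    Ideal.absNorm (Ideal.span {(2 : R), θ}) = 2 := by
  have h1 := congrArg Ideal.absNorm (h.P2_sq hp)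
  rw [map_mul] at h1
  have h2 := h.norm_int 2
  push_cast at h2
  rw [h2] at h1
  nlinarith

theorem P2_not_principal (h : HzRing R p θ) (hp : p % 8 = 7) :
    ¬ (Ideal.span {(2 : R), θ}).IsPrincipal := by
  rintro ⟨x, hx⟩
  obtain ⟨a, b, rfl⟩ := h.rep x
  have h1 := h.norm a b
  rw [← Ideal.submodule_span_eq, ← hx, h.P2_norm (by omega)] at h1
  have h2 : a ^ 2 + 2 * p * b ^ 2 = 2 := by
    have : 0 ≤ a ^ 2 + 2 * p * b ^ 2 := by positivity
    omega
  have hp' : (7 : ℤ) ≤ p := by omega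
  have hb : b = 0 := by
    by_contra hb
    have : 1 ≤ b ^ 2 := Int.one_le_abs (pow_ne_zero 2 hb) |>.trans (by rw [abs_of_nonneg (sq_nonneg b)])
    nlinarith [sq_nonneg a]
  rw [hb] at h2
  have h3 : a ≤ 1 := by nlinarith
  have h4 : -1 ≤ a := by nlinarith
  interval_cases a <;> omega

theorem Pp_ne_top (h : HzRing R p θ) (hp : p.Prime) :
    Ideal.span {(p : R), θ} ≠ ⊤ := by
  intro h0
  rw [Ideal.eq_top_iff_one, Ideal.mem_span_pair] at h0
  obtain ⟨x, y, hxy⟩ := h0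
  obtain ⟨c, d, rfl⟩ := h.rep y
  have := h.dvd hp.pos p 1 (-c) ⟨x - 2 * d, by
    push_cast; linear_combination -hxy + d * h.sq⟩
  have h1 := Int.le_of_dvd one_pos this.1
  have := hp.two_le
  omega

theorem torsion (h : HzRing R p θ) (hp : p.Prime) (hmod : p % 8 = 7)
    (hP : Ideal.span {(2 : R), θ} ≠ ⊥) :
    ∀ (n : ℕ) (I : Ideal R) (hI : I ≠ ⊥), Ideal.absNorm I = n → hzCl I hI ^ 2 = 1 →
      hzCl I hI = 1 ∨ hzCl I hI = hzCl _ hP := by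
  have hpp : Prime (p : ℤ) := Nat.prime_iff_prime_int.1 hp
  have hp0 := hp.pos
  have hs := h.sq
  have ht2 : hzCl _ hP * hzCl _ hP = 1 := hzCl_mul_eq_one _ _ _ _ _ (h.P2_sq (by omega))
  set t := hzCl _ hP with ht
  have hPp := h.P_ne_bot hp0 (p : R)
  have htp : hzCl _ hPp = t := by
    have := hzCl_mul_eq_one _ _ hP hPp _ (h.P2_Pp (by omega))
    rw [← ht] at this
    rw [← mul_left_cancel_iff (a := t), this, ht2]
  intro n
  induction n using Nat.strong_induction_on with
  | _ n ih =>
  intro I hI hn hcl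
  -- dividing out a known factor
  have step : ∀ (J : Ideal R) (hJ : J ≠ ⊥), J ≠ ⊤ → I ≤ J → (hzCl J hJ = 1 ∨ hzCl J hJ = t) →
      hzCl I hI = 1 ∨ hzCl I hI = t := by
    intro J hJ hJt hIJ hcJ
    obtain ⟨K, rfl⟩ := Ideal.dvd_iff_le.2 hIJ
    have hK : K ≠ ⊥ := right_ne_zero_of_mul hI
    have e := hzCl_mul J K hJ hK hI
    have hJ2 : hzCl J hJ ^ 2 = 1 := by
      rcases hcJ with h | h
      · rw [h, one_pow]
      · rw [h, pow_two, ht2]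
    have hK2 : hzCl K hK ^ 2 = 1 := by
      rw [e, mul_pow, hJ2, one_mul] at hcl
      exact hcl
    have hlt : Ideal.absNorm K < n := by
      rw [← hn, map_mul]
      have h1 : Ideal.absNorm J ≠ 1 := fun h => hJt (Ideal.absNorm_eq_one_iff.1 h)
      have h2 : Ideal.absNorm J ≠ 0 := fun h => hJ (Ideal.absNorm_eq_zero_iff.1 h)
      have h3 : Ideal.absNorm K ≠ 0 := fun h => hK (Ideal.absNorm_eq_zero_iff.1 h)
      have h4 : 2 ≤ Ideal.absNorm J := by omega
      nlinarith [Nat.pos_of_ne_zero h3]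
    rw [e]
    rcases ih _ hlt K hK rfl hK2 with h1 | h1 <;> rcases hcJ with h2 | h2 <;> rw [h1, h2]
    · simp
    · simp
    · simp
    · left; exact ht2
  have hII : I * I ≠ ⊥ := mul_ne_zero hI hI
  obtain ⟨α, hα⟩ : (I * I).IsPrincipal := by
    rw [← hzCl_eq_one _ hII, hzCl_mul I I hI hI, ← pow_two, hcl]
  rw [Ideal.submodule_span_eq] at hα
  obtain ⟨a, b, rfl⟩ := h.rep α
  by_cases hco : IsCoprime a b
  · have hN := congrArg Ideal.absNorm hα
    rw [map_mul, h.norm] at hN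
    have hN' : (Ideal.absNorm I : ℤ) ^ 2 = a ^ 2 + 2 * p * b ^ 2 := by
      have h1 : 0 ≤ a ^ 2 + 2 * p * b ^ 2 := by positivity
      have h2 : ((Ideal.absNorm I * Ideal.absNorm I : ℕ) : ℤ) = a ^ 2 + 2 * p * b ^ 2 := by
        rw [hN]; exact Int.natAbs_of_nonneg h1
      rw [← h2]; push_cast; ring
    obtain ⟨r, s, e, he, h1 | h1⟩ := hz_arith p hp (by omega) _ a b (by positivity) hco hN'
    · left
      rw [hzCl_eq_one]
      refine ⟨(r + s * θ : R), ?_⟩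
      rw [Ideal.submodule_span_eq]
      apply hz_sq_inj
      rw [hα, Ideal.span_singleton_mul_span_singleton]
      have e1 : (a + b * θ : R) = e * ((r + s * θ) * (r + s * θ)) := by
        rw [h1.1, h1.2]; push_cast; linear_combination (-e * s ^ 2 : R) * hs
      rw [e1]
      rcases he with rfl | rfl
      · simp
      · simp only [Int.cast_neg, Int.cast_one, neg_mul, one_mul, Ideal.span_singleton_neg]
    · right
      have : t * hzCl I hI = 1 := by
        apply hzCl_mul_eq_one _ _ hP hI (r + s * θ : R)
        apply hz_sq_inj
        rw [mul_mul_mul_comm, h.P2_sq (by omega), hα, Ideal.span_singleton_mul_span_singleton,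
          Ideal.span_singleton_mul_span_singleton]
        have e1 : (2 * (a + b * θ) : R) = e * ((r + s * θ) * (r + s * θ)) := by
          have h3 : (2 * a : R) = ((2 * a : ℤ) : R) := by push_cast; ring
          have h4 : (2 * b : R) = ((2 * b : ℤ) : R) := by push_cast; ring
          have h5 : (2 * (a + b * θ) : R) = (2 * a) + (2 * b) * θ := by ring
          rw [h5, h3, h4, h1.1, h1.2]; push_cast; linear_combination (-e * s ^ 2 : R) * hs
        rw [e1]
        rcases he with rfl | rfl
        · simp
        · simp only [Int.cast_neg, Int.cast_one, neg_mul, one_mul, Ideal.span_singleton_neg]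
      rw [← mul_left_cancel_iff (a := t), this, ht2]
  · rw [Int.isCoprime_iff_gcd_eq_one] at hco
    obtain ⟨q, hq, hd⟩ := Nat.exists_prime_and_dvd hco
    have hqq : Prime (q : ℤ) := Nat.prime_iff_prime_int.1 hq
    have hd' : (q : ℤ) ∣ (Int.gcd a b : ℤ) := by exact_mod_cast hd
    have hqa : (q : ℤ) ∣ a := hd'.trans (Int.gcd_dvd_left ..)
    have hqb : (q : ℤ) ∣ b := hd'.trans (Int.gcd_dvd_right ..)
    have hz : ∀ c d : ℤ, (c + d * θ : R) ∈ I →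
        (q : ℤ) ∣ c ^ 2 - 2 * p * d ^ 2 ∧ (q : ℤ) ∣ 2 * c * d := by
      intro c d hcd
      have h1 : (c + d * θ : R) * (c + d * θ) ∈ I * I := Ideal.mul_mem_mul hcd hcd
      rw [hα, Ideal.mem_span_singleton] at h1
      apply h.dvd hp0
      have h2 : (((q : ℤ) : R)) ∣ (a + b * θ : R) := by
        obtain ⟨a', rfl⟩ := hqa
        obtain ⟨b', rfl⟩ := hqb
        exact ⟨a' + b' * θ, by push_cast; ring⟩
      have h3 := h2.trans h1
      have e1 : (((c ^ 2 - 2 * p * d ^ 2 : ℤ) : R) + ((2 * c * d : ℤ) : R) * θ) =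
          (c + d * θ : R) * (c + d * θ) := by
        push_cast; linear_combination (-d ^ 2 : R) * hs
      rw [e1]; exact h3
    by_cases hq2 : q = 2
    · subst hq2
      refine step (Ideal.span {(2 : R), θ}) hP ?_ ?_ (Or.inr rfl)
      · intro h0
        have := h.P2_norm (by omega)
        rw [h0] at this
        simp at this
      · intro z hzI
        obtain ⟨c, d, rfl⟩ := h.rep z
        have h1 := (hz c d hzI).1
        have h2 : (2 : ℤ) ∣ c ^ 2 := by
          have : (2 : ℤ) ∣ 2 * p * d ^ 2 := ⟨p * d ^ 2, by ring⟩
          exact (dvd_sub_left this).1 h1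
        obtain ⟨k, rfl⟩ := Int.prime_two.dvd_of_dvd_pow h2
        rw [Ideal.mem_span_pair]
        exact ⟨k, d, by push_cast; ring⟩
    by_cases hqp : q = p
    · subst hqp
      refine step (Ideal.span {(q : R), θ}) hPp (h.Pp_ne_top hp) ?_ (Or.inr htp)
      intro z hzI
      obtain ⟨c, d, rfl⟩ := h.rep z
      have h1 := (hz c d hzI).1
      have h2 : (q : ℤ) ∣ c ^ 2 := by
        have : (q : ℤ) ∣ 2 * q * d ^ 2 := ⟨2 * d ^ 2, by ring⟩
        exact (dvd_sub_left this).1 h1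
      obtain ⟨k, rfl⟩ := hpp.dvd_of_dvd_pow h2
      rw [Ideal.mem_span_pair]
      exact ⟨k, d, by push_cast; ring⟩
    · have hq0 : ((q : ℤ) : R) ≠ 0 := h.int_ne_zero hp0 _ (by exact_mod_cast hq.ne_zero)
      have hb : Ideal.span {((q : ℤ) : R)} ≠ ⊥ := by rwa [Ne, Ideal.span_singleton_eq_bot]
      refine step (Ideal.span {((q : ℤ) : R)}) hb ?_ ?_ (Or.inl ((hzCl_eq_one _ _).2 ⟨_, rfl⟩))
      · intro h0
        have h1 := h.norm_int q
        rw [h0, Ideal.absNorm_top, Int.natAbs_pow, Int.natAbs_natCast] at h1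
        have := hq.two_le
        nlinarith
      · intro z hzI
        obtain ⟨c, d, rfl⟩ := h.rep z
        obtain ⟨h1, h2⟩ := hz c d hzI
        have hq2' : ¬ (q : ℤ) ∣ 2 := by
          intro hh
          have : q ∣ 2 := by exact_mod_cast hh
          exact hq2 ((Nat.prime_dvd_prime_iff_eq hq Nat.prime_two).1 this)
        have hqp' : ¬ (q : ℤ) ∣ p := by
          intro hh
          have : q ∣ p := by exact_mod_cast hh
          exact hqp ((Nat.prime_dvd_prime_iff_eq hq hp).1 this)
        have h3 : (q : ℤ) ∣ c ∧ (q : ℤ) ∣ d := by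
          rcases hqq.dvd_or_dvd h2 with h4 | h4
          · have h5 := (hqq.dvd_or_dvd h4).resolve_left hq2'
            refine ⟨h5, ?_⟩
            have h6 : (q : ℤ) ∣ 2 * p * d ^ 2 := (dvd_sub_right (dvd_pow h5 two_ne_zero)).1 h1
            rcases hqq.dvd_or_dvd h6 with h7 | h7
            · rcases hqq.dvd_or_dvd h7 with h8 | h8
              · exact absurd h8 hq2'
              · exact absurd h8 hqp'
            · exact hqq.dvd_of_dvd_pow h7
          · refine ⟨?_, h4⟩
            have h6 : (q : ℤ) ∣ c ^ 2 :=
              (dvd_sub_left (Dvd.dvd.mul_left (dvd_pow h4 two_ne_zero) _)).1 h1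
            exact hqq.dvd_of_dvd_pow h6
        obtain ⟨⟨c', rfl⟩, ⟨d', rfl⟩⟩ := h3
        rw [Ideal.mem_span_singleton]
        exact ⟨c' + d' * θ, by push_cast; ring⟩

/-- The ideal of order four. -/
theorem ideal_u (h : HzRing R p θ) (u v : ℤ) (huv : u ^ 2 = 2 * v ^ 2 + p)
    (hco : IsCoprime (u ^ 2) (8 * v)) :
    (Ideal.span {(u : R), 2 * v + θ} * Ideal.span {(u : R), 2 * v + θ}) * Ideal.span {(2 : R), θ}
      = Ideal.span {(2 * v + θ : R)} := by
  have hs := h.sq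
  have huv' : (u : R) ^ 2 = 2 * v ^ 2 + p := by exact_mod_cast congrArg (Int.cast : ℤ → R) huv
  obtain ⟨s, t, hst⟩ := hco
  have hst' : (s : R) * u ^ 2 + t * (8 * v) = 1 := by
    exact_mod_cast congrArg (Int.cast : ℤ → R) hst
  set I := Ideal.span {(u : R), 2 * v + θ} with hI
  set P := Ideal.span {(2 : R), θ} with hP
  set y : R := 2 * v + θ with hy
  have hu : (u : R) ∈ I := Ideal.subset_span (by simp)
  have hyI : y ∈ I := Ideal.subset_span (by simp [hy])
  have h2 : (2 : R) ∈ P := Ideal.subset_span (by simp)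
  have hθ : θ ∈ P := Ideal.subset_span (by simp)
  apply le_antisymm
  · rw [hI, hP, Ideal.span_pair_mul_span_pair, Ideal.span_mul_span', Ideal.span_le]
    rintro x ⟨a, ha, b, (hb : b = 2 ∨ b = θ), rfl⟩
    change a * b ∈ _
    rw [SetLike.mem_coe, Ideal.mem_span_singleton]
    have k1 : y ∣ (u * u : R) * 2 := ⟨2 * v - θ, by rw [hy]; linear_combination 2 * huv' + hs⟩
    have k2 : y ∣ (u * u : R) * θ := ⟨u * u - v * (2 * v - θ), by
      rw [hy]; linear_combination (-2 * v : R) * huv' - v * hs⟩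
    rcases ha with rfl | rfl | rfl | rfl <;> rcases hb with hb | hb <;> subst b
    · exact k1
    · exact k2
    · exact ⟨u * 2, by ring⟩
    · exact ⟨u * θ, by ring⟩
    · exact ⟨u * 2, by ring⟩
    · exact ⟨u * θ, by ring⟩
    · exact ⟨y * 2, by ring⟩
    · exact ⟨y * θ, by ring⟩
  · rw [Ideal.span_singleton_le_iff_mem]
    have m1 := Ideal.mul_mem_mul (Ideal.mul_mem_mul hu hu) h2
    have m2 := Ideal.mul_mem_mul (Ideal.mul_mem_mul hu hu) hθ
    have m3 := Ideal.mul_mem_mul (Ideal.mul_mem_mul hyI hyI) h2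
    have m4 := Ideal.add_mem _ (Ideal.mul_mem_left _ (s : R)
      (Ideal.add_mem _ m2 (Ideal.mul_mem_left _ (v : R) m1)))
      (Ideal.mul_mem_left _ (t : R) (Ideal.add_mem _ m3 (Ideal.mul_mem_left _ (2 : R) m1)))
    convert m4 using 1
    have e1 : (u : R) * u * θ + v * (u * u * 2) = u ^ 2 * y := by rw [hy]; ring
    have e2 : y * y * 2 + 2 * (u * u * 2) = 8 * v * y := by
      rw [hy]; linear_combination 4 * huv' + 2 * hs
    rw [e1, e2]
    linear_combination (-y) * hst'

theorem ideal_u_norm (h : HzRing R p θ) (hp : p % 2 = 1) (u : ℕ) (v : ℤ)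
    (huv : (u : ℤ) ^ 2 = 2 * v ^ 2 + p)
    (hco : IsCoprime ((u : ℤ) ^ 2) (8 * v)) :
    Ideal.absNorm (Ideal.span {((u : ℤ) : R), 2 * v + θ}) = u := by
  have h1 := congrArg Ideal.absNorm (h.ideal_u u v huv hco)
  rw [map_mul, map_mul, h.P2_norm hp] at h1
  have h2 := h.norm (2 * v) 1
  push_cast at h2
  rw [one_mul] at h2
  rw [h2, show (2 * v) ^ 2 + 2 * (p : ℤ) * 1 = ((2 * u ^ 2 : ℕ) : ℤ) by push_cast; linarith,
    Int.natAbs_natCast] at h1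
  have h3 : Ideal.absNorm (Ideal.span {((u : ℤ) : R), 2 * v + θ}) ^ 2 = u ^ 2 := by nlinarith
  exact Nat.pow_left_injective two_ne_zero h3

theorem ideal_q_norm (h : HzRing R p θ) (hp : 0 < p) (q : ℕ) (hq : q.Prime) (x : ℤ)
    (hx : (q : ℤ) ∣ x ^ 2 + 2 * p) :
    Ideal.absNorm (Ideal.span {((q : ℤ) : R), x + θ}) = q := by
  have hs := h.sq
  set Q := Ideal.span {((q : ℤ) : R), x + θ} with hQ
  have hq1 : ¬ (q : ℤ) ∣ 1 := by
    intro h; have := Int.le_of_dvd one_pos h; have := hq.two_le; omega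
  have hqQ : Ideal.span {((q : ℤ) : R)} ≤ Q := by
    rw [Ideal.span_singleton_le_iff_mem]; exact Ideal.subset_span (by simp)
  have hne : Q ≠ ⊤ := by
    intro h0
    rw [Ideal.eq_top_iff_one, hQ, Ideal.mem_span_pair] at h0
    obtain ⟨c, d, hcd⟩ := h0
    obtain ⟨m, hm⟩ := hx
    have hm' : (x : R) ^ 2 + 2 * p = q * m := by exact_mod_cast congrArg (Int.cast : ℤ → R) hm
    have := (h.dvd hp q x (-1) ⟨c * (x - θ) + m * d, by
      push_cast at hcd ⊢; linear_combination (-(x - θ)) * hcd + d * hm' - d * hs⟩).2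
    exact hq1 ((dvd_neg).1 this)
  obtain ⟨K, hK⟩ := Ideal.dvd_iff_le.2 hqQ
  have hN := congrArg Ideal.absNorm hK
  rw [h.norm_int, map_mul, Int.natAbs_pow, Int.natAbs_natCast] at hN
  have hd : Ideal.absNorm Q ∣ q ^ 2 := ⟨_, hN⟩
  rw [Nat.dvd_prime_pow hq] at hd
  obtain ⟨k, hk, hk'⟩ := hd
  interval_cases k
  · exact absurd (Ideal.absNorm_eq_one_iff.1 (by simpa using hk')) hne
  · simpa using hk'
  · exfalso
    rw [hk'] at hN
    have hK1 : Ideal.absNorm K = 1 := by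
      have : 0 < q ^ 2 := pow_pos hq.pos 2
      exact (Nat.eq_of_mul_eq_mul_left this (by omega : q ^ 2 * 1 = _)).symm
    rw [Ideal.absNorm_eq_one_iff.1 hK1, Ideal.mul_top] at hK
    have hm : (x + θ : R) ∈ Q := Ideal.subset_span (by simp)
    rw [← hK, Ideal.mem_span_singleton] at hm
    exact hq1 (h.dvd hp q x 1 (by simpa using hm)).2

theorem main [Finite (ClassGroup R)] (h : HzRing R p θ) (hp : p.Prime) (hmod : p % 8 = 7) :
    (4 ∣ Nat.card (ClassGroup R) ∧ ¬ 8 ∣ Nat.card (ClassGroup R)) ↔ p % 16 = 7 := by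
  have : Fact p.Prime := ⟨hp⟩
  have hp0 := hp.pos
  -- the character
  have hchi : ∀ I J : nonZeroDivisors (Ideal R), ClassGroup.mk0 I = ClassGroup.mk0 J →
      hzChi p (Ideal.absNorm (I : Ideal R)) = hzChi p (Ideal.absNorm (J : Ideal R)) := by
    intro I J hIJ
    obtain ⟨x, y, hx, hy, hxy⟩ := ClassGroup.mk0_eq_mk0_iff.1 hIJ
    have key : ∀ z : R, z ≠ 0 → hzChi p (Ideal.absNorm (Ideal.span {z})) = 1 := by
      intro z hz
      obtain ⟨a, b, rfl⟩ := h.rep z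
      rw [h.norm]
      apply hzChi_norm p hmod _ a b rfl
      by_contra hab
      push Not at hab
      apply hz
      simp [hab.1, hab.2]
    have h1 := congrArg (fun K => hzChi p (Ideal.absNorm K)) hxy
    simpa only [map_mul, hzChi_mul, key x hx, key y hy, one_mul] using h1
  let rep : ClassGroup R → nonZeroDivisors (Ideal R) :=
    Function.surjInv ClassGroup.mk0_surjective
  have hrep : ∀ c, ClassGroup.mk0 (rep c) = c := Function.surjInv_eq _
  let f : ClassGroup R → ℤ := fun c => hzChi p (Ideal.absNorm (rep c : Ideal R))
  have hfcl : ∀ (I : Ideal R) (hI : I ≠ ⊥), f (hzCl I hI) = hzChi p (Ideal.absNorm I) := by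
    intro I hI
    exact hchi (rep _) ⟨I, mem_nonZeroDivisors_of_ne_zero hI⟩ (hrep _)
  have hP := h.P_ne_bot hp0 (2 : R)
  obtain ⟨u', v, hu0, huv⟩ := hz_thue p hp hmod
  obtain ⟨u, rfl⟩ := Int.eq_ofNat_of_zero_le hu0.le
  have hco : IsCoprime ((u : ℤ) ^ 2) (8 * v) := by
    apply isCoprime_of_prime_dvd
    · rintro ⟨h1, -⟩
      have : 0 < (u : ℤ) ^ 2 := by positivity
      omega
    · intro q hq h1 h2
      have hqu := hq.dvd_of_dvd_pow h1
      have hodd : ¬ (2 : ℤ) ∣ u := by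
        intro hh
        have : (2 : ℤ) ∣ (u : ℤ) ^ 2 := dvd_pow hh two_ne_zero
        omega
      have hqv : q ∣ v := by
        rcases hq.dvd_or_dvd h2 with h3 | h3
        · have h4 : q ∣ 2 := hq.dvd_of_dvd_pow (show q ∣ 2 ^ 3 by norm_num; exact h3)
          have h5 : (2 : ℤ) ∣ q :=
            (Prime.associated_of_dvd hq Int.prime_two h4).symm.dvd
          exact absurd (h5.trans hqu) hodd
        · exact h3
      -- then q² divides p
      obtain ⟨m, hm⟩ := hqu
      obtain ⟨l, hl⟩ := hqv
      have h6 : q * q ∣ (p : ℤ) := ⟨m ^ 2 - 2 * l ^ 2, by rw [hm, hl] at huv; linarith⟩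
      have hsf : Squarefree (p : ℤ) := (Nat.prime_iff_prime_int.1 hp).squarefree
      exact hq.not_isUnit (hsf q h6)
  have hIu : Ideal.span {((u : ℤ) : R), 2 * v + θ} ≠ ⊥ := by
    intro h0
    have := h.ideal_u_norm (by omega) u v huv hco
    rw [h0, Ideal.absNorm_bot] at this
    omega
  have hPP : hzCl _ hP * hzCl _ hP = 1 := hzCl_mul_eq_one _ _ _ _ _ (h.P2_sq (by omega))
  have hiP : hzCl _ hIu ^ 2 = hzCl _ hP := by
    have := hzCl_mul_eq_one _ _ (mul_ne_zero hIu hIu) hP _ (h.ideal_u u v huv hco)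
    rw [hzCl_mul _ _ hIu hIu, ← pow_two] at this
    rw [← mul_right_cancel_iff (a := hzCl _ hP), this, hPP]
  obtain ⟨q, hq, hqc, x, hx⟩ := hz_dirichlet p hmod
  have hQn := h.ideal_q_norm hp0 q hq x hx
  have hQ : Ideal.span {((q : ℤ) : R), x + θ} ≠ ⊥ := by
    intro h0
    rw [h0, Ideal.absNorm_bot] at hQn
    exact hq.ne_zero hQn.symm
  obtain ⟨h4, h8⟩ := hz_group (hzCl _ hP) (hzCl _ hIu) f
    (by rw [Ne, hzCl_eq_one]; exact h.P2_not_principal hmod)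
    (by
      intro g hg
      obtain ⟨⟨I, hI⟩, rfl⟩ := ClassGroup.mk0_surjective g
      exact h.torsion hp hmod hP _ I (nonZeroDivisors.ne_zero hI) rfl hg)
    (by rw [pow_two, hPP]) hiP
    (by
      intro g k
      have : f (g * k) = hzChi p (Ideal.absNorm ((rep g * rep k : nonZeroDivisors (Ideal R)) : Ideal R)) := by
        apply hchi
        rw [hrep, map_mul, hrep, hrep]
      rw [this, Submonoid.coe_mul, map_mul, hzChi_mul])
    (by
      intro g
      exact hzChi_pm p _ (Ideal.absNorm_ne_zero_of_nonZeroDivisors _))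
    ⟨hzCl _ hQ, by rw [hfcl, hQn, hqc]⟩
  rw [hfcl, h.ideal_u_norm (by omega) u v huv hco, hzChi_u p hmod u v huv] at h8
  tauto

end HzRing

end

theorem hz_norm_trace {S : Type*} [Field S] [Algebra ℚ S] (b : Module.Basis (Fin 2) ℚ S)
    (θ : S) (c : ℚ) (h0 : b 0 = 1) (h1 : b 1 = θ) (hθ : θ * θ = algebraMap ℚ S (-c)) (r t : ℚ) :
    Algebra.norm ℚ (algebraMap ℚ S r + algebraMap ℚ S t * θ) = r ^ 2 + c * t ^ 2 ∧
    Algebra.trace ℚ S (algebraMap ℚ S r + algebraMap ℚ S t * θ) = 2 * r := by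
  set x := algebraMap ℚ S r + algebraMap ℚ S t * θ with hx
  have e0 : x * b 0 = r • b 0 + t • b 1 := by
    rw [h0, h1, hx, Algebra.smul_def, Algebra.smul_def]; ring
  have e1 : x * b 1 = (-c * t) • b 0 + r • b 1 := by
    rw [h0, h1, hx, Algebra.smul_def, Algebra.smul_def, map_mul]
    linear_combination (algebraMap ℚ S t) * hθ
  have m : Algebra.leftMulMatrix b x = !![r, -c * t; t, r] := by
    ext i j
    rw [Algebra.leftMulMatrix_eq_repr_mul]
    fin_cases j
    · change (b.repr (x * b 0)) i = _
      rw [e0]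
      fin_cases i <;> simp
    · change (b.repr (x * b 1)) i = _
      rw [e1]
      fin_cases i <;> simp
  rw [Algebra.norm_eq_matrix_det b, Algebra.trace_eq_matrix_trace b, m]
  refine ⟨?_, ?_⟩
  · rw [Matrix.det_fin_two_of]; ring
  · rw [Matrix.trace_fin_two_of]; ring

theorem hz_integral (p : ℕ) (hp : p.Prime) (h2 : p ≠ 2) (r t : ℚ) (n m : ℤ)
    (hn : (n : ℚ) = r ^ 2 + 2 * p * t ^ 2) (hm : (m : ℚ) = 2 * r) :
    ∃ a b : ℤ, r = a ∧ t = b := by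
  have hp0 : (p : ℚ) ≠ 0 := by exact_mod_cast hp.ne_zero
  have hpz : (p : ℤ) ≠ 0 := by exact_mod_cast hp.ne_zero
  have hsq : (4 * p * t) ^ 2 = ((2 * p * (4 * n - m ^ 2) : ℤ) : ℚ) := by
    push_cast; rw [hn, hm]; ring
  have htint : IsIntegral ℤ (4 * p * t : ℚ) := by
    apply IsIntegral.of_pow (n := 2) (by norm_num)
    rw [hsq]
    exact isIntegral_algebraMap (R := ℤ)
  obtain ⟨w, hw⟩ := IsIntegrallyClosed.isIntegral_iff.1 htint
  have hw' : (w : ℚ) = 4 * p * t := by simpa using hw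
  have hw2 : w ^ 2 = 2 * p * (4 * n - m ^ 2) := by
    rw [← hw'] at hsq; exact_mod_cast hsq
  have hsf : Squarefree ((2 * p : ℕ) : ℤ) := Int.squarefree_natCast.2
    ((Nat.squarefree_mul ((Nat.coprime_primes Nat.prime_two hp).2 h2.symm)).2
      ⟨Nat.prime_two.squarefree, hp.squarefree⟩)
  have hdw : ((2 * p : ℕ) : ℤ) ∣ w :=
    (hsf.dvd_pow_iff_dvd two_ne_zero).1 ⟨4 * n - m ^ 2, by rw [hw2]; push_cast; ring⟩
  obtain ⟨k, hk⟩ := hdw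
  have hk1 : 2 * p * k ^ 2 = 4 * n - m ^ 2 := by
    have h3 : (2 * p : ℤ) * (2 * p * k ^ 2) = 2 * p * (4 * n - m ^ 2) := by
      rw [← hw2, hk]; push_cast; ring
    exact mul_left_cancel₀ (by positivity) h3
  have ht : (k : ℚ) = 2 * t := by
    rw [hk] at hw'
    push_cast at hw'
    have : (2 * p : ℚ) * k = (2 * p) * (2 * t) := by linarith
    exact mul_left_cancel₀ (by positivity) this
  have hm2 : (2 : ℤ) ∣ m := by
    apply Int.prime_two.dvd_of_dvd_pow (n := 2)
    exact ⟨2 * n - p * k ^ 2, by linarith⟩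
  obtain ⟨a, rfl⟩ := hm2
  have hk2 : (2 : ℤ) ∣ k := by
    have h4 : (2 : ℤ) ∣ p * k ^ 2 := ⟨n - a ^ 2, by linarith⟩
    rcases Int.prime_two.dvd_or_dvd h4 with h5 | h5
    · have : 2 ∣ p := by exact_mod_cast h5
      exact absurd ((Nat.prime_dvd_prime_iff_eq Nat.prime_two hp).1 this).symm h2
    · exact Int.prime_two.dvd_of_dvd_pow h5
  obtain ⟨b, rfl⟩ := hk2
  push_cast at hm ht
  exact ⟨a, b, by linarith, by linarith⟩

theorem hz_ring (p : ℕ) (hp : p.Prime) (hmod : p % 8 = 7)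
    (F : Type*) [Field F] [NumberField F]
    (hF : Nonempty (F ≃ₐ[ℚ] AdjoinRoot (X ^ 2 + C (2 * p : ℚ)))) :
    ∃ θ : 𝓞 F, HzRing (𝓞 F) p θ := by
  obtain ⟨e⟩ := hF
  set f : ℚ[X] := X ^ 2 + C (2 * p : ℚ) with hf
  have hdeg : f.natDegree = 2 := by rw [hf]; compute_degree!
  have hf0 : f ≠ 0 := by
    intro h; rw [h] at hdeg; simp at hdeg
  have hp0 : (0 : ℚ) < p := by exact_mod_cast hp.pos
  have hfin : Module.finrank ℚ F = 2 := by
    rw [e.toLinearEquiv.finrank_eq, (AdjoinRoot.powerBasis hf0).finrank,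
      AdjoinRoot.powerBasis_dim, hdeg]
  obtain ⟨s, hs⟩ : ∃ s : F, s * s = algebraMap ℚ F (-(2 * p)) := by
    refine ⟨e.symm (AdjoinRoot.root f), ?_⟩
    rw [← map_mul, ← e.symm.commutes]
    congr 1
    have h1 := AdjoinRoot.eval₂_root f
    rw [hf, eval₂_add, eval₂_pow, eval₂_X, eval₂_C, ← hf] at h1
    rw [map_neg, AdjoinRoot.algebraMap_eq]
    linear_combination h1
  have hli : LinearIndependent ℚ ![(1 : F), s] := by
    rw [LinearIndependent.pair_iff]
    intro a b hab
    rw [Algebra.smul_def, Algebra.smul_def, mul_one] at hab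
    have h1 : algebraMap ℚ F (a ^ 2 + 2 * p * b ^ 2) = algebraMap ℚ F 0 := by
      simp only [map_add, map_mul, map_pow, map_zero, map_neg] at hs ⊢
      linear_combination (algebraMap ℚ F a - algebraMap ℚ F b * s) * hab +
        (algebraMap ℚ F b) ^ 2 * hs
    have h2 := (algebraMap ℚ F).injective h1
    have h3 : 0 ≤ 2 * p * b ^ 2 := by positivity
    have h4 : a ^ 2 = 0 := by nlinarith [sq_nonneg a]
    have h5 : (2 * p) * b ^ 2 = 0 := by linarith
    have h6 : b ^ 2 = 0 := (mul_eq_zero.1 h5).resolve_left (by positivity)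
    exact ⟨pow_eq_zero_iff two_ne_zero |>.1 h4, pow_eq_zero_iff two_ne_zero |>.1 h6⟩
  let B : Module.Basis (Fin 2) ℚ F := basisOfLinearIndependentOfCardEqFinrank hli (by simp [hfin])
  have hB0 : B 0 = 1 := by simp [B]
  have hB1 : B 1 = s := by simp [B]
  have hNT := hz_norm_trace B s (2 * p) hB0 hB1 hs
  have hsint : IsIntegral ℤ s := by
    apply IsIntegral.of_pow (n := 2) (by norm_num)
    rw [pow_two, hs]
    have : algebraMap ℚ F (-(2 * p)) = algebraMap ℤ F (-(2 * p)) := by simp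
    rw [this]
    exact isIntegral_algebraMap
  let θ : 𝓞 F := ⟨s, hsint⟩
  have hθ : algebraMap (𝓞 F) F θ = s := rfl
  have hinj : Function.Injective (algebraMap (𝓞 F) F) := RingOfIntegers.coe_injective
  refine ⟨θ, ?_, ?_, ?_⟩
  · apply hinj
    rw [map_mul, hθ, hs]
    simp only [map_neg, map_mul, map_natCast, map_ofNat]
  · intro x
    have hx : IsIntegral ℤ (algebraMap (𝓞 F) F x) := RingOfIntegers.isIntegral_coe x
    obtain ⟨r, t, hrt⟩ : ∃ r t : ℚ, algebraMap (𝓞 F) F x = algebraMap ℚ F r + algebraMap ℚ F t * s := by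
      refine ⟨B.repr (algebraMap (𝓞 F) F x) 0, B.repr (algebraMap (𝓞 F) F x) 1, ?_⟩
      have := B.sum_repr (algebraMap (𝓞 F) F x)
      rw [Fin.sum_univ_two, hB0, hB1, Algebra.smul_def, Algebra.smul_def, mul_one] at this
      exact this.symm
    obtain ⟨hN, hT⟩ := hNT r t
    rw [← hrt] at hN hT
    obtain ⟨n, hn⟩ := IsIntegrallyClosed.isIntegral_iff.1 (Algebra.isIntegral_norm ℚ hx)
    obtain ⟨m, hm⟩ := IsIntegrallyClosed.isIntegral_iff.1 (Algebra.isIntegral_trace (L := ℚ) hx)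
    rw [hN] at hn
    rw [hT] at hm
    obtain ⟨a, b, rfl, rfl⟩ := hz_integral p hp (by omega) r t n m (by simpa using hn) (by simpa using hm)
    refine ⟨a, b, hinj ?_⟩
    rw [hrt]
    simp [hθ]
  · intro a b
    rw [Ideal.absNorm_span_singleton]
    congr 1
    have h1 : ((Algebra.norm ℤ (a + b * θ : 𝓞 F) : ℤ) : ℚ) = ((a ^ 2 + 2 * p * b ^ 2 : ℤ) : ℚ) := by
      rw [Algebra.coe_norm_int]
      have := (hNT a b).1
      push_cast
      rw [← this]
      congr 1
      simp [hθ]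
    exact_mod_cast h1

/-- **Hasse.** For a prime `p ≡ -1 (mod 8)`, writing `h(-2p)` for the class
number of the imaginary quadratic field `ℚ(√(-2p)) = ℚ[x]/(x² + 2p)`, one has
`4 ∥ h(-2p)` (i.e. `4 ∣ h(-2p)` and `8 ∤ h(-2p)`) if and only if `p ≡ 7 (mod 16)`. -/
theorem four_exactly_divides_classNumber_neg_two_p_iff
    (p : ℕ) (hp : p.Prime) (hmod : p % 8 = 7)
    (F : Type*) [Field F] [NumberField F]
    (hF : Nonempty (F ≃ₐ[ℚ] AdjoinRoot (X ^ 2 + C (2 * p : ℚ)))) :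
    (4 ∣ classNumber F ∧ ¬ 8 ∣ classNumber F) ↔ p % 16 = 7 := by
  obtain ⟨θ, h⟩ := hz_ring p hp hmod F hF
  have hm := h.main hp hmod
  rw [Nat.card_eq_fintype_card] at hm
  exact hm
end
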